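/- arXiv:2111.08100 — 2 statements merged into one kernel-verified Lean document; each statement's English description precedes it below -/
import Mathlib

section
/- There exists a function c assigning to every v ∈ [0,1) and every positive integer s a real number c(v, s) > 0, such that for every two-prover one-round game G whose value val(G) is less than 1 and whose answer sets A_1, A_2 satisfy |A_1| · |A_2| = s, and for every positive integer ℓ, the value of the ℓ-fold parallel repetition G^ℓ satisfies val(G^ℓ) ≤ 2^{−c(val(G), s) · ℓ}. -/
/-- The value of a two-prover one-round game given by the query function `f` and the
acceptance predicate `V`: the maximum over deterministic strategies
`P₁ : Q₁ → A₁`, `P₂ : Q₂ → A₂` of the fraction of random seeds `r` that the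
verifier accepts. -/
noncomputable def gameValue {R Q₁ Q₂ A₁ A₂ : Type} [Fintype R] [Nonempty R]
    [Fintype Q₁] [DecidableEq Q₁] [Fintype Q₂] [DecidableEq Q₂]
    [Fintype A₁] [Nonempty A₁] [Fintype A₂] [Nonempty A₂]
    (f : R → Q₁ × Q₂) (V : R → A₁ → A₂ → Bool) : ℝ :=
  (Finset.univ : Finset ((Q₁ → A₁) × (Q₂ → A₂))).sup' Finset.univ_nonempty
    (fun P => ((Finset.univ.filter
      (fun r : R => V r (P.1 (f r).1) (P.2 (f r).2) = true)).card : ℝ) /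
        (Fintype.card R : ℝ))

/-!
Fix strategies for the repeated game and suppose that they win the coordinates in a small set `S`
with a probability that is not exponentially small. Conditioning on this event costs little relative
entropy, so for a typical coordinate `i ∉ S` the seed `ω i` stays almost uniform, even once the
provers are told the seeds in `S`, their answers there, and one of the two queries in every other
coordinate. Given this information `u`, the answers in coordinate `i` are independent, each
depending only on its own query; and the law of `u` given both queries to coordinate `i` is close to
its law given either of them. By correlated sampling, two provers of a single game can therefore
agree on `u` without communicating and play coordinate `i` of the repeated game. Hence they win
coordinate `i` with conditional probability at most `(1 + val) / 2`, and a linear number of such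
steps yields exponential decay.
-/

namespace ParallelRepetition

open Finset Function Filter Topology
open scoped BigOperators

section FiberMean

variable {R X : Type*} [Fintype R] [DecidableEq X]

/-- The average of `h` over the fibre of `q` above `x`: the conditional expectation of `h` given
`q = x` under the uniform distribution. It is `0` when the fibre is empty. -/
noncomputable def fiberMean (q : R → X) (h : R → ℝ) (x : X) : ℝ :=
  𝔼 r with q r = x, h r

lemma fiberMean_nonneg (q : R → X) {h : R → ℝ} (hh : ∀ r, 0 ≤ h r) (x : X) :
    0 ≤ fiberMean q h x :=
  expect_nonneg fun r _ ↦ hh r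

lemma fiberMean_pos (q : R → X) {h : R → ℝ} (hh : ∀ r, 0 ≤ h r) {r : R} (hr : 0 < h r) :
    0 < fiberMean q h (q r) := by
  rw [fiberMean, expect_eq_sum_div_card]
  have hmem : r ∈ ({r' | q r' = q r} : Finset R) := by simp
  exact div_pos (sum_pos' (fun r' _ ↦ hh r') ⟨r, hmem, hr⟩) (by exact_mod_cast card_pos.2 ⟨r, hmem⟩)

lemma fiberMean_sum {U : Type*} (s : Finset U) (q : R → X) (h : U → R → ℝ) (x : X) :
    fiberMean q (fun r ↦ ∑ u ∈ s, h u r) x = ∑ u ∈ s, fiberMean q (h u) x :=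
  expect_sum_comm _ _ _

lemma fiberMean_sub_const_apply (q : R → X) (h : R → ℝ) (c : ℝ) (r : R) :
    fiberMean q (fun r ↦ h r - c) (q r) = fiberMean q h (q r) - c := by
  rw [fiberMean, expect_sub_distrib, expect_const ⟨r, by simp⟩, fiberMean]

lemma abs_fiberMean_le (q : R → X) (h : R → ℝ) (x : X) :
    |fiberMean q h x| ≤ fiberMean q (fun r ↦ |h r|) x :=
  abs_expect_le _ _

lemma sum_fiberMean_comp (q : R → X) (h : R → ℝ) :
    ∑ r, fiberMean q h (q r) = ∑ r, h r := by
  have hmaps : ∀ r ∈ univ, q r ∈ univ.image q := fun r _ ↦ mem_image_of_mem q (mem_univ r)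
  rw [← sum_fiberwise_of_maps_to hmaps h, sum_comp (fiberMean q h) q]
  exact sum_congr rfl fun x _ ↦ card_smul_expect _ _

lemma sum_div_fiberMean_le (q : R → X) (h : R → ℝ) (x : X) :
    ∑ r with q r = x, h r / fiberMean q h x ≤ #{r | q r = x} := by
  rw [← sum_div, ← card_smul_expect, nsmul_eq_mul, ← fiberMean]
  obtain h0 | h0 := eq_or_ne (fiberMean q h x) 0
  · simp [h0]
  · rw [mul_div_cancel_right₀ _ h0]

end FiberMean

section Strategies

lemma exists_mem_stdSimplex_mul_eq {A : Type*} [Fintype A] [Nonempty A] {c : A → ℝ}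
    (hc : ∀ a, 0 ≤ c a) : ∃ p ∈ stdSimplex ℝ A, ∀ a, c a = (∑ a', c a') * p a := by
  classical
  obtain h0 | hpos := (sum_nonneg fun a _ ↦ hc a : 0 ≤ ∑ a, c a).eq_or_lt
  · refine ⟨_, single_mem_stdSimplex ℝ (Classical.arbitrary A), fun a ↦ ?_⟩
    rw [← h0, zero_mul]
    exact (sum_eq_zero_iff_of_nonneg fun a _ ↦ hc a).1 h0.symm a (mem_univ a)
  · refine ⟨fun a ↦ c a / ∑ a', c a', ⟨fun a ↦ div_nonneg (hc a) hpos.le, ?_⟩, fun a ↦ ?_⟩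
    · rw [← sum_div, div_self hpos.ne']
    · rw [mul_div_cancel₀ _ hpos.ne']

lemma exists_le_of_mem_stdSimplex {A : Type*} [Fintype A] {p : A → ℝ} (hp : p ∈ stdSimplex ℝ A)
    (h : A → ℝ) : ∃ a, ∑ a', p a' * h a' ≤ h a := by
  by_contra! hlt
  have hle : ∀ a ∈ univ, p a * h a ≤ p a * ∑ a', p a' * h a' :=
    fun a _ ↦ mul_le_mul_of_nonneg_left (hlt a).le (hp.1 a)
  obtain ⟨a, -, ha⟩ : ∃ a ∈ univ, 0 < p a :=
    exists_lt_of_sum_lt (by simp [hp.2] : ∑ _a : A, (0 : ℝ) < ∑ a, p a)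
  have := sum_lt_sum hle ⟨a, mem_univ a, mul_lt_mul_of_pos_left (hlt a) ha⟩
  rw [← sum_mul, hp.2, one_mul] at this
  exact this.false

lemma exists_sum_le_sum_apply {R X A : Type*} [Fintype R] [Fintype A]
    {q : R → X} {α : X → A → ℝ} (hα : ∀ x, α x ∈ stdSimplex ℝ A) (g : R → A → ℝ) :
    ∃ P : X → A, ∑ r, ∑ a, α (q r) a * g r a ≤ ∑ r, g r (P (q r)) := by
  classical
  choose P hP using fun x ↦ exists_le_of_mem_stdSimplex (hα x) fun a ↦ ∑ r with q r = x, g r a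
  have hmaps : ∀ r ∈ univ, q r ∈ univ.image q := fun r _ ↦ mem_image_of_mem q (mem_univ r)
  refine ⟨P, ?_⟩
  rw [← sum_fiberwise_of_maps_to hmaps, ← sum_fiberwise_of_maps_to hmaps]
  refine sum_le_sum fun x _ ↦ ?_
  calc ∑ r with q r = x, ∑ a, α (q r) a * g r a
      = ∑ r with q r = x, ∑ a, α x a * g r a :=
        sum_congr rfl fun r hr ↦ by rw [(mem_filter.1 hr).2]
    _ = ∑ a, α x a * ∑ r with q r = x, g r a := by simp only [sum_comm (t := univ), mul_sum]
    _ ≤ ∑ r with q r = x, g r (P x) := hP x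
    _ = ∑ r with q r = x, g r (P (q r)) := sum_congr rfl fun r hr ↦ by rw [(mem_filter.1 hr).2]

variable {A₁ A₂ : Type*} [Fintype A₁] [Fintype A₂]

/-- The probability that the predicate `v` accepts independent answers drawn from the laws `p`
and `q`. -/
def acceptProb (v : A₁ → A₂ → Bool) (p : A₁ → ℝ) (q : A₂ → ℝ) : ℝ :=
  ∑ a, ∑ b with v a b, p a * q b

lemma acceptProb_nonneg {v : A₁ → A₂ → Bool} {p : A₁ → ℝ} {q : A₂ → ℝ}
    (hp : p ∈ stdSimplex ℝ A₁) (hq : q ∈ stdSimplex ℝ A₂) : 0 ≤ acceptProb v p q :=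
  sum_nonneg fun a _ ↦ sum_nonneg fun b _ ↦ mul_nonneg (hp.1 a) (hq.1 b)

lemma acceptProb_le_one {v : A₁ → A₂ → Bool} {p : A₁ → ℝ} {q : A₂ → ℝ}
    (hp : p ∈ stdSimplex ℝ A₁) (hq : q ∈ stdSimplex ℝ A₂) : acceptProb v p q ≤ 1 := by
  calc acceptProb v p q ≤ ∑ a, ∑ b, p a * q b :=
        sum_le_sum fun a _ ↦ sum_le_sum_of_subset_of_nonneg (filter_subset _ _)
          fun b _ _ ↦ mul_nonneg (hp.1 a) (hq.1 b)
    _ = 1 := by rw [← sum_mul_sum, hp.2, hq.2, one_mul]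

end Strategies

section GameValue

variable {R Q₁ Q₂ A₁ A₂ : Type} [Fintype R] [Nonempty R] [Fintype Q₁] [DecidableEq Q₁] [Fintype Q₂]
  [DecidableEq Q₂] [Fintype A₁] [Nonempty A₁] [Fintype A₂] [Nonempty A₂]

lemma gameValue_nonneg (f : R → Q₁ × Q₂) (V : R → A₁ → A₂ → Bool) : 0 ≤ gameValue f V :=
  le_sup'_of_le _ (mem_univ (Classical.arbitrary _)) (by positivity)

lemma card_filter_le_card_mul_gameValue (f : R → Q₁ × Q₂) (V : R → A₁ → A₂ → Bool)
    (P₁ : Q₁ → A₁) (P₂ : Q₂ → A₂) :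
    (#{r | V r (P₁ (f r).1) (P₂ (f r).2)} : ℝ) ≤ Fintype.card R * gameValue f V := by
  rw [mul_comm, ← div_le_iff₀ (by exact_mod_cast Fintype.card_pos)]
  exact le_sup' (fun P : (Q₁ → A₁) × (Q₂ → A₂) ↦
    (#{r | V r (P.1 (f r).1) (P.2 (f r).2)} : ℝ) / Fintype.card R) (mem_univ (P₁, P₂))

lemma sum_acceptProb_le_card_mul_gameValue (f : R → Q₁ × Q₂) (V : R → A₁ → A₂ → Bool)
    {α : Q₁ → A₁ → ℝ} (hα : ∀ x, α x ∈ stdSimplex ℝ A₁)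
    {β : Q₂ → A₂ → ℝ} (hβ : ∀ y, β y ∈ stdSimplex ℝ A₂) :
    ∑ r, acceptProb (V r) (α (f r).1) (β (f r).2) ≤ Fintype.card R * gameValue f V := by
  obtain ⟨P₁, hP₁⟩ := exists_sum_le_sum_apply (q := fun r ↦ (f r).1) hα
    fun r a ↦ ∑ b with V r a b, β (f r).2 b
  obtain ⟨P₂, hP₂⟩ := exists_sum_le_sum_apply (q := fun r ↦ (f r).2) hβ
    fun r b ↦ if V r (P₁ (f r).1) b then 1 else 0
  calc ∑ r, acceptProb (V r) (α (f r).1) (β (f r).2)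
      = ∑ r, ∑ a, α (f r).1 a * ∑ b with V r a b, β (f r).2 b := by
        simp only [acceptProb, mul_sum]
    _ ≤ ∑ r, ∑ b with V r (P₁ (f r).1) b, β (f r).2 b := hP₁
    _ = ∑ r, ∑ b, β (f r).2 b * if V r (P₁ (f r).1) b then 1 else 0 := by
        simp only [mul_ite, mul_one, mul_zero, sum_filter]
    _ ≤ ∑ r, if V r (P₁ (f r).1) (P₂ (f r).2) then 1 else 0 := hP₂
    _ = #{r | V r (P₁ (f r).1) (P₂ (f r).2)} := sum_boole _ _
    _ ≤ Fintype.card R * gameValue f V := card_filter_le_card_mul_gameValue f V P₁ P₂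

end GameValue

section CorrelatedSampling

variable {Z : Type*} [Fintype Z]

section

variable [DecidableEq Z]

lemma card_numbering_forall_le_eq {C : Finset Z} {z₀ z₁ : Z} (h₀ : z₀ ∈ C) (h₁ : z₁ ∈ C) :
    #{π : Numbering Z | ∀ z ∈ C, π z₀ ≤ π z} = #{π : Numbering Z | ∀ z ∈ C, π z₁ ≤ π z} := by
  have hswap : ∀ z ∈ C, Equiv.swap z₀ z₁ z ∈ C := fun z hz ↦ by
    rw [Equiv.swap_apply_def]; split_ifs <;> assumption
  refine card_nbij' (fun π ↦ (Equiv.swap z₀ z₁).trans π) (fun π ↦ (Equiv.swap z₀ z₁).trans π)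
    (fun π hπ ↦ ?_) (fun π hπ ↦ ?_) (fun π _ ↦ by ext; simp) (fun π _ ↦ by ext; simp)
  all_goals
    simp only [coe_filter, mem_univ, true_and, Set.mem_ofPred_eq] at hπ ⊢
    intro z hz
    simpa using hπ _ (hswap z hz)

lemma card_numbering_forall_le_mul_card {C : Finset Z} {z₀ : Z} (h₀ : z₀ ∈ C) :
    #{π : Numbering Z | ∀ z ∈ C, π z₀ ≤ π z} * #C = Fintype.card (Numbering Z) := by
  have hunique (π : Numbering Z) : #{z ∈ C | ∀ z' ∈ C, π z ≤ π z'} = 1 := by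
    obtain ⟨m, hm, hmin⟩ := exists_min_image C π ⟨z₀, h₀⟩
    refine card_eq_one.2 ⟨m, eq_singleton_iff_unique_mem.2 ⟨mem_filter.2 ⟨hm, hmin⟩, ?_⟩⟩
    intro z hz
    rw [mem_filter] at hz
    exact π.injective (le_antisymm (hz.2 m hm) (hmin z hz.1))
  calc #{π : Numbering Z | ∀ z ∈ C, π z₀ ≤ π z} * #C
      = ∑ z ∈ C, #{π : Numbering Z | ∀ z' ∈ C, π z ≤ π z'} := by
        rw [sum_congr rfl fun z hz ↦ card_numbering_forall_le_eq hz h₀, sum_const, smul_eq_mul,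
          mul_comm]
    _ = ∑ π : Numbering Z, #{z ∈ C | ∀ z' ∈ C, π z ≤ π z'} := by
        simp only [card_filter]; exact sum_comm
    _ = Fintype.card (Numbering Z) := by
        simp only [hunique, sum_const, card_univ, smul_eq_mul, mul_one]

end

/-- The element of `C` that comes first in the numbering `π`. With `π` as shared randomness, it is
the sample drawn by a player who knows `C`. If `C` is empty it is an arbitrary element. -/
noncomputable def firstIn [Nonempty Z] (π : Numbering Z) (C : Finset Z) : Z :=
  Classical.epsilon fun z ↦ z ∈ C ∧ ∀ z' ∈ C, π z ≤ π z'

lemma firstIn_eq [Nonempty Z] {π : Numbering Z} {C : Finset Z} {z : Z} (hz : z ∈ C)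
    (hmin : ∀ z' ∈ C, π z ≤ π z') : firstIn π C = z := by
  have h : firstIn π C ∈ C ∧ ∀ z' ∈ C, π (firstIn π C) ≤ π z' :=
    Classical.epsilon_spec (p := fun z ↦ z ∈ C ∧ ∀ z' ∈ C, π z ≤ π z') ⟨z, hz, hmin⟩
  exact π.injective (le_antisymm (h.2 z hz) (hmin _ h.1))

-- If the first element of `A ∪ B` lies in `A ∩ B`, then both players draw it.
lemma card_numbering_mul_sum_inter_le [DecidableEq Z] [Nonempty Z] (A B : Finset Z)
    {F : Z → Z → ℝ} (hF : ∀ z z', 0 ≤ F z z') :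
    Fintype.card (Numbering Z) * ∑ z ∈ A ∩ B, F z z ≤
      #(A ∪ B) * ∑ π : Numbering Z, F (firstIn π A) (firstIn π B) := by
  have hagree (π : Numbering Z) : ∑ z ∈ A ∩ B with ∀ z' ∈ A ∪ B, π z ≤ π z', F z z ≤
      F (firstIn π A) (firstIn π B) := by
    have heq : ∀ z ∈ ({z ∈ A ∩ B | ∀ z' ∈ A ∪ B, π z ≤ π z'} : Finset Z),
        firstIn π A = z ∧ firstIn π B = z := fun z hz ↦ by
      simp only [mem_filter, mem_inter, mem_union] at hz
      exact ⟨firstIn_eq hz.1.1 fun z' h ↦ hz.2 z' (.inl h),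
        firstIn_eq hz.1.2 fun z' h ↦ hz.2 z' (.inr h)⟩
    calc ∑ z ∈ A ∩ B with ∀ z' ∈ A ∪ B, π z ≤ π z', F z z
        = ∑ z ∈ A ∩ B with ∀ z' ∈ A ∪ B, π z ≤ π z', F (firstIn π A) (firstIn π B) :=
          sum_congr rfl fun z hz ↦ by rw [(heq z hz).1, (heq z hz).2]
      _ ≤ ∑ _z ∈ {firstIn π A}, F (firstIn π A) (firstIn π B) :=
          sum_le_sum_of_subset_of_nonneg (fun z hz ↦ mem_singleton.2 (heq z hz).1.symm)
            fun _ _ _ ↦ hF _ _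
      _ = F (firstIn π A) (firstIn π B) := sum_singleton _ _
  calc Fintype.card (Numbering Z) * ∑ z ∈ A ∩ B, F z z
      = ∑ z ∈ A ∩ B, #(A ∪ B) * ∑ π : Numbering Z with ∀ z' ∈ A ∪ B, π z ≤ π z', F z z := by
        rw [mul_sum]
        refine sum_congr rfl fun z hz ↦ ?_
        rw [← card_numbering_forall_le_mul_card (inter_subset_union hz), sum_const, nsmul_eq_mul]
        push_cast
        ring
    _ = #(A ∪ B) * ∑ π : Numbering Z, ∑ z ∈ A ∩ B with ∀ z' ∈ A ∪ B, π z ≤ π z', F z z := by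
        rw [← mul_sum]; simp only [sum_filter]; rw [sum_comm]
    _ ≤ #(A ∪ B) * ∑ π : Numbering Z, F (firstIn π A) (firstIn π B) := by
        gcongr with π; exact hagree π

variable {U : Type*} [Fintype U]

/-- The points of `U × Fin M` below the graph of `m`. Its uniform distribution projects to the law
on `U` proportional to `m`, as long as `m ≤ M`. -/
def hypograph (M : ℕ) (m : U → ℕ) : Finset (U × Fin M) :=
  {z | z.2 < m z.1}

lemma sum_hypograph {M : ℕ} {m : U → ℕ} (hm : ∀ u, m u ≤ M) (F : U → ℝ) :
    ∑ z ∈ hypograph M m, F z.1 = ∑ u, m u * F u := by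
  rw [hypograph, sum_filter, Fintype.sum_prod_type]
  refine sum_congr rfl fun u _ ↦ ?_
  simp only
  rw [← sum_filter, sum_const, nsmul_eq_mul, Fin.card_filter_val_lt, min_eq_right (hm u)]

lemma hypograph_inter [DecidableEq U] (M : ℕ) (m n : U → ℕ) :
    hypograph M m ∩ hypograph M n = hypograph M (m ⊓ n) := by
  ext; simp [hypograph]

lemma hypograph_union [DecidableEq U] (M : ℕ) (m n : U → ℕ) :
    hypograph M m ∪ hypograph M n = hypograph M (m ⊔ n) := by
  ext; simp [hypograph]

lemma card_hypograph_union_le [DecidableEq U] {M : ℕ} {m n : U → ℕ} (hm : ∑ u, m u ≤ M)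
    (hn : ∀ u, n u ≤ M) :
    (#(hypograph M m ∪ hypograph M n) : ℝ) ≤ M + ∑ u, |(m u : ℝ) - n u| := by
  have hm' : ∀ u, m u ≤ M := fun u ↦ (single_le_sum_of_canonicallyOrdered (mem_univ u)).trans hm
  have hcard := sum_hypograph (fun u ↦ max_le (hm' u) (hn u)) fun _ ↦ 1
  simp only [sum_const, nsmul_eq_mul, mul_one] at hcard
  rw [hypograph_union, Pi.sup_def, hcard]
  calc ∑ u, ((max (m u) (n u) : ℕ) : ℝ) ≤ ∑ u, (m u + |(m u : ℝ) - n u|) := by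
        refine sum_le_sum fun u _ ↦ ?_
        rw [Nat.cast_max]
        exact max_le (by linarith [abs_nonneg ((m u : ℝ) - n u)])
          (by linarith [neg_abs_le ((m u : ℝ) - n u)])
    _ ≤ M + ∑ u, |(m u : ℝ) - n u| := by
        rw [sum_add_distrib]
        gcongr
        exact_mod_cast hm

lemma card_numbering_mul_sum_le [DecidableEq U] [Nonempty U] {M : ℕ} [NeZero M] {m n : U → ℕ}
    (hm : ∑ u, m u ≤ M) (hn : ∀ u, n u ≤ M) {w : U → U → ℝ} (hw₀ : ∀ u v, 0 ≤ w u v)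
    (hw₁ : ∀ u v, w u v ≤ 1) :
    Fintype.card (Numbering (U × Fin M)) * (∑ u, m u * w u u - 2 * ∑ u, |(m u : ℝ) - n u|) ≤
      M * ∑ π : Numbering (U × Fin M),
        w (firstIn π (hypograph M m)).1 (firstIn π (hypograph M n)).1 := by
  have hm' : ∀ u, m u ≤ M := fun u ↦ (single_le_sum_of_canonicallyOrdered (mem_univ u)).trans hm
  set T := ∑ π : Numbering (U × Fin M),
    w (firstIn π (hypograph M m)).1 (firstIn π (hypograph M n)).1
  set d := ∑ u, |(m u : ℝ) - n u|
  set N := (Fintype.card (Numbering (U × Fin M)) : ℝ)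
  have hd : 0 ≤ d := sum_nonneg fun _ _ ↦ abs_nonneg _
  have hT₀ : 0 ≤ T := sum_nonneg fun _ _ ↦ hw₀ _ _
  have hTN : T ≤ N := (sum_le_sum fun _ _ ↦ hw₁ _ _).trans_eq (by simp [N])
  have hagree : N * ∑ u, ((m u ⊓ n u : ℕ) : ℝ) * w u u ≤ (M + d) * T := by
    have h := card_numbering_mul_sum_inter_le (hypograph M m) (hypograph M n)
      (F := fun z z' ↦ w z.1 z'.1) fun _ _ ↦ hw₀ _ _
    rw [hypograph_inter, sum_hypograph (m := m ⊓ n) (fun u ↦ inf_le_left.trans (hm' u))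
      fun u ↦ w u u] at h
    exact h.trans (mul_le_mul_of_nonneg_right (card_hypograph_union_le hm hn) hT₀)
  have hmin : ∑ u, m u * w u u ≤ ∑ u, ((m u ⊓ n u : ℕ) : ℝ) * w u u + d := by
    rw [← sum_add_distrib]
    refine sum_le_sum fun u _ ↦ ?_
    have hu : (m u : ℝ) - (m u ⊓ n u : ℕ) ≤ |(m u : ℝ) - n u| := by
      rw [Nat.cast_min, sub_le_comm]
      exact le_min (by linarith [abs_nonneg ((m u : ℝ) - n u)])
        (by linarith [le_abs_self ((m u : ℝ) - n u)])
    linarith [mul_le_mul hu (hw₁ u u) (hw₀ u u) (abs_nonneg _)]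
  calc N * (∑ u, m u * w u u - 2 * d)
      ≤ N * (∑ u, ((m u ⊓ n u : ℕ) : ℝ) * w u u - d) :=
        mul_le_mul_of_nonneg_left (by linarith) (Nat.cast_nonneg _)
    _ ≤ (M + d) * T - d * N := by linarith
    _ ≤ M * T := by linarith [mul_le_mul_of_nonneg_left hTN hd]

end CorrelatedSampling

section

variable {R Q₁ Q₂ A₁ A₂ : Type} {U : Type*} [Fintype R] [Nonempty R] [Fintype Q₁]
  [DecidableEq Q₁] [Fintype Q₂] [DecidableEq Q₂] [Fintype A₁] [Nonempty A₁] [Fintype A₂]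
  [Nonempty A₂] [Fintype U] [Nonempty U] (f : R → Q₁ × Q₂) (V : R → A₁ → A₂ → Bool)
  {α : U → Q₁ → A₁ → ℝ}
  (hα : ∀ u x, α u x ∈ stdSimplex ℝ A₁) {β : U → Q₂ → A₂ → ℝ} (hβ : ∀ u y, β u y ∈ stdSimplex ℝ A₂)
include hα hβ

lemma sum_natCast_mul_acceptProb_le {M : ℕ} [NeZero M] {m : Q₁ → U → ℕ} (hm : ∀ x, ∑ u, m x u ≤ M)
    {n : Q₂ → U → ℕ} (hn : ∀ y u, n y u ≤ M) :
    ∑ r, ∑ u, m (f r).1 u * acceptProb (V r) (α u (f r).1) (β u (f r).2) ≤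
      M * (Fintype.card R * gameValue f V) +
        2 * ∑ r, ∑ u, |(m (f r).1 u : ℝ) - n (f r).2 u| := by
  classical
  set N := Fintype.card (Numbering (U × Fin M))
  have hN : (0 : ℝ) < N := by
    have : Nonempty (Numbering (U × Fin M)) := ⟨Fintype.equivFin _⟩
    exact_mod_cast Fintype.card_pos
  have hsample (r : R) := card_numbering_mul_sum_le (hm (f r).1) (hn (f r).2)
    (fun u v ↦ acceptProb_nonneg (v := V r) (hα u (f r).1) (hβ v (f r).2))
    (fun u v ↦ acceptProb_le_one (hα u (f r).1) (hβ v (f r).2))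
  have hround (π : Numbering (U × Fin M)) := sum_acceptProb_le_card_mul_gameValue f V
    (fun x ↦ hα (firstIn π (hypograph M (m x))).1 x)
    (fun y ↦ hβ (firstIn π (hypograph M (n y))).1 y)
  have hbound := calc
    N * ∑ r, (∑ u, m (f r).1 u * acceptProb (V r) (α u (f r).1) (β u (f r).2) -
          2 * ∑ u, |(m (f r).1 u : ℝ) - n (f r).2 u|)
      ≤ M * ∑ π : Numbering (U × Fin M), ∑ r,
          acceptProb (V r) (α (firstIn π (hypograph M (m (f r).1))).1 (f r).1)
            (β (firstIn π (hypograph M (n (f r).2))).1 (f r).2) := by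
        rw [sum_comm, mul_sum, mul_sum]
        exact sum_le_sum fun r _ ↦ hsample r
    _ ≤ M * ∑ _π : Numbering (U × Fin M), Fintype.card R * gameValue f V := by
        gcongr with π; exact hround π
    _ = N * (M * (Fintype.card R * gameValue f V)) := by
        rw [sum_const, nsmul_eq_mul, card_univ]; ring
  have := le_of_mul_le_mul_left hbound hN
  rw [sum_sub_distrib, ← mul_sum] at this
  linarith

-- Correlated sampling for real weights: round `N * μ` and `N * ν` down and let `N → ∞`.
lemma sum_mul_acceptProb_le {μ : Q₁ → U → ℝ} (hμ : ∀ x, μ x ∈ stdSimplex ℝ U) {ν : Q₂ → U → ℝ}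
    (hν : ∀ y, ν y ∈ stdSimplex ℝ U) :
    ∑ r, ∑ u, μ (f r).1 u * acceptProb (V r) (α u (f r).1) (β u (f r).2) ≤
      Fintype.card R * gameValue f V + 2 * ∑ r, ∑ u, |μ (f r).1 u - ν (f r).2 u| := by
  have hfloor {t : ℝ} (ht : 0 ≤ t) : Tendsto (fun N : ℕ ↦ (⌊t * N⌋₊ : ℝ) / N) atTop (𝓝 t) :=
    (tendsto_nat_floor_mul_div_atTop ht).comp tendsto_natCast_atTop_atTop
  have hleft := tendsto_finsetSum univ fun r _ ↦ tendsto_finsetSum univ fun u _ ↦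
    (hfloor ((hμ (f r).1).1 u)).mul_const (acceptProb (V r) (α u (f r).1) (β u (f r).2))
  have hright := ((tendsto_finsetSum univ fun r _ ↦ tendsto_finsetSum univ fun u _ ↦
    ((hfloor ((hμ (f r).1).1 u)).sub (hfloor ((hν (f r).2).1 u))).abs).const_mul 2).const_add
      (Fintype.card R * gameValue f V)
  refine le_of_tendsto_of_tendsto hleft hright ?_
  filter_upwards [eventually_gt_atTop 0] with N hN
  have : NeZero N := ⟨hN.ne'⟩
  have hm (x : Q₁) : ∑ u, ⌊μ x u * N⌋₊ ≤ N := by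
    have : ∑ u, (⌊μ x u * N⌋₊ : ℝ) ≤ ∑ u, μ x u * N :=
      sum_le_sum fun u _ ↦ Nat.floor_le (mul_nonneg ((hμ x).1 u) N.cast_nonneg)
    rw [← sum_mul, (hμ x).2, one_mul] at this
    exact_mod_cast this
  have hn (y : Q₂) (u : U) : ⌊ν y u * N⌋₊ ≤ N :=
    Nat.floor_le_of_le (mul_le_of_le_one_left N.cast_nonneg (mem_Icc_of_mem_stdSimplex (hν y) u).2)
  have hround := div_le_div_of_nonneg_right (sum_natCast_mul_acceptProb_le f V hα hβ hm hn)
    (Nat.cast_nonneg (α := ℝ) N)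
  simpa only [add_div, mul_div_assoc, sum_div, div_mul_eq_mul_div, ← sub_div, abs_div,
    Nat.abs_cast, mul_div_cancel_left₀ _ (Nat.cast_ne_zero.2 hN.ne' : (N : ℝ) ≠ 0)] using hround

end

section Embedding

variable {R X U : Type*} [Fintype R] [DecidableEq X] [Fintype U]

/-- The `ℓ¹`-distance of the joint weights `B` to the weights that keep, on each fibre of `q`, the
masses of the `u : U` but redistribute them uniformly inside the fibre. It is small when `u` is
nearly independent of `r` given `q r`. -/
noncomputable def fiberDeviation (q : R → X) (B : U → R → ℝ) : ℝ :=
  ∑ r, ∑ u, |B u r - fiberMean q (B u) (q r)|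

-- The law `μ x` normalises the conditional means of the `B u` given `q = x`; the normalisation
-- costs the distance of the marginal of `B` to the uniform law.
lemma exists_mem_stdSimplex_sum_abs_sub_le [Nonempty U] (q : R → X) {B : U → R → ℝ}
    (hB : ∀ u r, 0 ≤ B u r) :
    ∃ μ : X → U → ℝ, (∀ x, μ x ∈ stdSimplex ℝ U) ∧
      ∑ r, ∑ u, |B u r - μ (q r) u / Fintype.card R| ≤
        fiberDeviation q B + ∑ r, |∑ u, B u r - (Fintype.card R : ℝ)⁻¹| := by
  choose μ hμ hμ' using fun x ↦
    exists_mem_stdSimplex_mul_eq fun u ↦ fiberMean_nonneg q (hB u) x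
  have hnormalise (x : X) : ∑ u, |fiberMean q (B u) x - μ x u / Fintype.card R| =
      |∑ u, fiberMean q (B u) x - (Fintype.card R : ℝ)⁻¹| := by
    calc ∑ u, |fiberMean q (B u) x - μ x u / Fintype.card R|
        = ∑ u, |∑ u, fiberMean q (B u) x - (Fintype.card R : ℝ)⁻¹| * μ x u :=
          sum_congr rfl fun u _ ↦ by
            rw [hμ' x u, div_eq_inv_mul, ← sub_mul, abs_mul, abs_of_nonneg ((hμ x).1 u)]
      _ = |∑ u, fiberMean q (B u) x - (Fintype.card R : ℝ)⁻¹| := by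
          rw [← mul_sum, (hμ x).2, mul_one]
  refine ⟨μ, hμ, ?_⟩
  calc ∑ r, ∑ u, |B u r - μ (q r) u / Fintype.card R|
      ≤ ∑ r, ∑ u, (|B u r - fiberMean q (B u) (q r)| +
          |fiberMean q (B u) (q r) - μ (q r) u / Fintype.card R|) := by
        gcongr; exact abs_sub_le _ _ _
    _ = fiberDeviation q B +
          ∑ r, |fiberMean q (fun r ↦ ∑ u, B u r - (Fintype.card R : ℝ)⁻¹) (q r)| := by
        simp only [sum_add_distrib, hnormalise, fiberMean_sub_const_apply, fiberMean_sum,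
          fiberDeviation]
    _ ≤ fiberDeviation q B + ∑ r, |∑ u, B u r - (Fintype.card R : ℝ)⁻¹| := by
        rw [← sum_fiberMean_comp q fun r ↦ |∑ u, B u r - (Fintype.card R : ℝ)⁻¹|]
        exact add_le_add_right (sum_le_sum fun r _ ↦ abs_fiberMean_le _ _ _) _

end Embedding

-- `B` is close to the laws `μ (f r).1` and to the laws `ν (f r).2`, so these are close to each
-- other and correlated sampling applies.
lemma sum_mul_acceptProb_le_gameValue_add {R Q₁ Q₂ A₁ A₂ : Type} {U : Type*} [Fintype R]
    [Nonempty R] [Fintype Q₁] [DecidableEq Q₁] [Fintype Q₂] [DecidableEq Q₂] [Fintype A₁]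
    [Nonempty A₁] [Fintype A₂] [Nonempty A₂] [Fintype U] [Nonempty U] (f : R → Q₁ × Q₂)
    (V : R → A₁ → A₂ → Bool) {α : U → Q₁ → A₁ → ℝ} (hα : ∀ u x, α u x ∈ stdSimplex ℝ A₁)
    {β : U → Q₂ → A₂ → ℝ} (hβ : ∀ u y, β u y ∈ stdSimplex ℝ A₂) {B : U → R → ℝ}
    (hB : ∀ u r, 0 ≤ B u r) {δ : ℝ} (h₁ : fiberDeviation (fun r ↦ (f r).1) B ≤ δ)
    (h₂ : fiberDeviation (fun r ↦ (f r).2) B ≤ δ)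
    (h : ∑ r, |∑ u, B u r - (Fintype.card R : ℝ)⁻¹| ≤ δ) :
    ∑ r, ∑ u, B u r * acceptProb (V r) (α u (f r).1) (β u (f r).2) ≤
      gameValue f V + 10 * δ := by
  obtain ⟨μ, hμ, hμB⟩ := exists_mem_stdSimplex_sum_abs_sub_le (fun r ↦ (f r).1) hB
  obtain ⟨ν, hν, hνB⟩ := exists_mem_stdSimplex_sum_abs_sub_le (fun r ↦ (f r).2) hB
  have hR : (0 : ℝ) < Fintype.card R := by exact_mod_cast Fintype.card_pos
  have hμν : (∑ r, ∑ u, |μ (f r).1 u - ν (f r).2 u|) / Fintype.card R ≤ 4 * δ := by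
    calc (∑ r, ∑ u, |μ (f r).1 u - ν (f r).2 u|) / Fintype.card R
        = ∑ r, ∑ u, |μ (f r).1 u / Fintype.card R - ν (f r).2 u / Fintype.card R| := by
          simp only [← sub_div, abs_div, Nat.abs_cast, sum_div]
      _ ≤ ∑ r, ∑ u, (|B u r - μ (f r).1 u / Fintype.card R| +
            |B u r - ν (f r).2 u / Fintype.card R|) := by
          gcongr with r _ u
          rw [abs_sub_comm (B u r)]
          exact abs_sub_le _ _ _
      _ ≤ 4 * δ := by simp only [sum_add_distrib]; linarith
  have hsampling := div_le_div_of_nonneg_right (sum_mul_acceptProb_le f V hα hβ hμ hν) hR.le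
  rw [add_div, mul_div_cancel_left₀ _ hR.ne', mul_div_assoc] at hsampling
  calc ∑ r, ∑ u, B u r * acceptProb (V r) (α u (f r).1) (β u (f r).2)
      ≤ ∑ r, ∑ u, (μ (f r).1 u / Fintype.card R *
          acceptProb (V r) (α u (f r).1) (β u (f r).2) +
            |B u r - μ (f r).1 u / Fintype.card R|) := by
        gcongr with r _ u
        rw [← sub_le_iff_le_add', ← sub_mul]
        calc (B u r - μ (f r).1 u / Fintype.card R) * acceptProb (V r) (α u (f r).1) (β u (f r).2)
            ≤ |B u r - μ (f r).1 u / Fintype.card R| *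
                acceptProb (V r) (α u (f r).1) (β u (f r).2) :=
              mul_le_mul_of_nonneg_right (le_abs_self _) (acceptProb_nonneg (hα u _) (hβ u _))
          _ ≤ |B u r - μ (f r).1 u / Fintype.card R| :=
              mul_le_of_le_one_right (abs_nonneg _) (acceptProb_le_one (hα u _) (hβ u _))
    _ = (∑ r, ∑ u, μ (f r).1 u * acceptProb (V r) (α u (f r).1) (β u (f r).2)) / Fintype.card R +
          ∑ r, ∑ u, |B u r - μ (f r).1 u / Fintype.card R| := by
        simp only [sum_add_distrib, sum_div, div_mul_eq_mul_div]
    _ ≤ gameValue f V + 10 * δ := by linarith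

section Pinsker

variable {ι : Type*} [Fintype ι] {q p : ι → ℝ}

-- Termwise, `log t ≤ t - 1` at `t = √(p a / q a)`.
lemma sum_sq_sqrt_sub_sqrt_le (hq : q ∈ stdSimplex ℝ ι) (hp : p ∈ stdSimplex ℝ ι)
    (hqp : ∀ a, 0 < q a → 0 < p a) :
    ∑ a, (√(q a) - √(p a)) ^ 2 ≤ ∑ a, q a * Real.log (q a / p a) := by
  have hlog (a : ι) : 2 * q a - 2 * (√(q a) * √(p a)) ≤ q a * Real.log (q a / p a) := by
    obtain h | h := (hq.1 a).eq_or_lt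
    · simp [← h]
    have hsq := Real.sqrt_pos.2 h
    have hsp := Real.sqrt_pos.2 (hqp a h)
    have hsqrt : Real.log (q a / p a) = -(2 * Real.log (√(p a) / √(q a))) := by
      rw [← Real.sqrt_div' _ h.le, Real.log_sqrt (div_nonneg (hp.1 a) h.le), ← inv_div,
        Real.log_inv]
      ring
    have hmul : q a * (√(p a) / √(q a)) = √(q a) * √(p a) := by
      nth_rewrite 1 [← Real.mul_self_sqrt h.le]
      field_simp
    rw [hsqrt, ← hmul]
    linarith [mul_le_mul_of_nonneg_left (Real.log_le_sub_one_of_pos (div_pos hsp hsq)) h.le]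
  calc ∑ a, (√(q a) - √(p a)) ^ 2
      = ∑ a, ((2 * q a - 2 * (√(q a) * √(p a))) + (p a - q a)) := by
        refine sum_congr rfl fun a _ ↦ ?_
        rw [sub_sq, Real.sq_sqrt (hq.1 a), Real.sq_sqrt (hp.1 a)]
        ring
    _ = ∑ a, (2 * q a - 2 * (√(q a) * √(p a))) := by
        rw [sum_add_distrib, sum_sub_distrib (f := p), hq.2, hp.2, sub_self, add_zero]
    _ ≤ ∑ a, q a * Real.log (q a / p a) := sum_le_sum fun a _ ↦ hlog a

lemma sum_sq_sqrt_add_sqrt_le (hq : q ∈ stdSimplex ℝ ι) (hp : p ∈ stdSimplex ℝ ι) :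
    ∑ a, (√(q a) + √(p a)) ^ 2 ≤ 4 := by
  calc ∑ a, (√(q a) + √(p a)) ^ 2 ≤ ∑ a, 2 * (q a + p a) := by
        refine sum_le_sum fun a _ ↦ ?_
        simpa only [Real.sq_sqrt (hq.1 a), Real.sq_sqrt (hp.1 a)] using
          add_sq_le (a := √(q a)) (b := √(p a))
    _ = 4 := by rw [← mul_sum, sum_add_distrib, hq.2, hp.2]; norm_num

-- Cauchy–Schwarz, through the Hellinger distance.
lemma sq_sum_abs_sub_le_sum_mul_log (hq : q ∈ stdSimplex ℝ ι) (hp : p ∈ stdSimplex ℝ ι)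
    (hqp : ∀ a, 0 < q a → 0 < p a) :
    (∑ a, |q a - p a|) ^ 2 ≤ 4 * ∑ a, q a * Real.log (q a / p a) := by
  calc (∑ a, |q a - p a|) ^ 2
      = (∑ a, |√(q a) - √(p a)| * (√(q a) + √(p a))) ^ 2 := by
        congr 1
        refine sum_congr rfl fun a _ ↦ ?_
        have hfactor : q a - p a = (√(q a) - √(p a)) * (√(q a) + √(p a)) := by
          rw [mul_comm, ← sq_sub_sq, Real.sq_sqrt (hq.1 a), Real.sq_sqrt (hp.1 a)]
        rw [hfactor, abs_mul, abs_of_nonneg (by positivity : 0 ≤ √(q a) + √(p a))]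
    _ ≤ (∑ a, |√(q a) - √(p a)| ^ 2) * ∑ a, (√(q a) + √(p a)) ^ 2 := sum_mul_sq_le_sq_mul_sq _ _ _
    _ ≤ (∑ a, q a * Real.log (q a / p a)) * 4 := by
        simp only [sq_abs]
        have := sum_sq_sqrt_sub_sqrt_le hq hp hqp
        exact mul_le_mul this (sum_sq_sqrt_add_sqrt_le hq hp) (sum_nonneg fun _ _ ↦ sq_nonneg _)
          ((sum_nonneg fun _ _ ↦ sq_nonneg _).trans this)
    _ = 4 * ∑ a, q a * Real.log (q a / p a) := mul_comm _ _

end Pinsker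

section CondDiv

variable {E X U : Type*} [Fintype E] [DecidableEq X] [Fintype U]

/-- The relative entropy of the joint weights `B` with respect to their redistribution along the
fibres of `q`, as in `fiberDeviation`. -/
noncomputable def condDiv (q : E → X) (B : U → E → ℝ) : ℝ :=
  ∑ u, ∑ e, B u e * Real.log (B u e / fiberMean q (B u) (q e))

lemma sq_fiberDeviation_le (q : E → X) {B : U → E → ℝ} (hB₀ : ∀ u e, 0 ≤ B u e)
    (hB₁ : ∑ u, ∑ e, B u e = 1) : fiberDeviation q B ^ 2 ≤ 4 * condDiv q B := by
  have hmem : (fun z : U × E ↦ B z.1 z.2) ∈ stdSimplex ℝ (U × E) :=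
    ⟨fun z ↦ hB₀ z.1 z.2, by rw [Fintype.sum_prod_type, hB₁]⟩
  have hmem' : (fun z : U × E ↦ fiberMean q (B z.1) (q z.2)) ∈ stdSimplex ℝ (U × E) :=
    ⟨fun z ↦ fiberMean_nonneg q (hB₀ z.1) _, by
      simp only [Fintype.sum_prod_type, sum_fiberMean_comp, hB₁]⟩
  have hpinsker := sq_sum_abs_sub_le_sum_mul_log hmem hmem' fun z hz ↦
    fiberMean_pos q (hB₀ z.1) hz
  simp only [Fintype.sum_prod_type] at hpinsker
  rwa [fiberDeviation, sum_comm]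

lemma condDiv_nonneg (q : E → X) {B : U → E → ℝ} (hB₀ : ∀ u e, 0 ≤ B u e)
    (hB₁ : ∑ u, ∑ e, B u e = 1) : 0 ≤ condDiv q B := by
  linarith [sq_nonneg (fiberDeviation q B), sq_fiberDeviation_le q hB₀ hB₁]

end CondDiv

section JointLaw

variable {Ω U E : Type*} [DecidableEq U] [DecidableEq E] (W : Finset Ω) (υ : Ω → U) (Y : Ω → E)

/-- The joint law of `υ` and `Y` under the uniform distribution on `W`. -/
noncomputable def jointLaw (u : U) (e : E) : ℝ :=
  (#{ω ∈ W | υ ω = u ∧ Y ω = e} : ℝ) / #W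

lemma jointLaw_nonneg (u : U) (e : E) : 0 ≤ jointLaw W υ Y u e := by
  unfold jointLaw; positivity

lemma jointLaw_pos {ω : Ω} (hω : ω ∈ W) : 0 < jointLaw W υ Y (υ ω) (Y ω) :=
  div_pos (by exact_mod_cast card_pos.2 ⟨ω, by simp [hω]⟩) (by exact_mod_cast card_pos.2 ⟨ω, hω⟩)

lemma sum_jointLaw_mul [Fintype U] [Fintype E] (F : U → E → ℝ) :
    ∑ u, ∑ e, jointLaw W υ Y u e * F u e = (∑ ω ∈ W, F (υ ω) (Y ω)) / #W := by
  simp only [jointLaw, div_mul_eq_mul_div, ← sum_div]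
  congr 1
  rw [← sum_fiberwise W υ]
  refine sum_congr rfl fun u _ ↦ ?_
  rw [← sum_fiberwise _ Y]
  refine sum_congr rfl fun e _ ↦ ?_
  rw [filter_filter, ← nsmul_eq_mul, ← sum_const]
  exact sum_congr rfl fun ω hω ↦ by rw [(mem_filter.1 hω).2.1, (mem_filter.1 hω).2.2]

variable {W} in
lemma sum_jointLaw_eq_one [Fintype U] [Fintype E] (hW : W.Nonempty) :
    ∑ u, ∑ e, jointLaw W υ Y u e = 1 := by
  have h := sum_jointLaw_mul W υ Y fun _ _ ↦ 1
  simp only [mul_one, sum_const, nsmul_eq_mul] at h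
  rw [h, div_self (by exact_mod_cast hW.card_pos.ne')]

lemma sum_filter_jointLaw [Fintype U] {U' : Type*} [DecidableEq U'] (ψ : U → U') (u' : U') (e : E) :
    ∑ u with ψ u = u', jointLaw W υ Y u e = jointLaw W (ψ ∘ υ) Y u' e := by
  simp only [jointLaw, ← sum_div, ← Nat.cast_sum]
  have hmaps : Set.MapsTo υ ({ω ∈ W | (ψ ∘ υ) ω = u' ∧ Y ω = e} : Finset Ω)
      ({u | ψ u = u'} : Finset U) := fun ω hω ↦ by simp_all
  rw [card_eq_sum_card_fiberwise hmaps]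
  congr 2
  refine sum_congr rfl fun u hu ↦ ?_
  rw [filter_filter]
  congr 1
  refine filter_congr fun ω _ ↦ ⟨fun h ↦ ?_, fun h ↦ ⟨h.2, h.1.2⟩⟩
  exact ⟨⟨(congrArg ψ h.1).trans (mem_filter.1 hu).2, h.2⟩, h.1⟩

lemma fiberDeviation_jointLaw_comp_le [Fintype U] [Fintype E] {U' X : Type*} [Fintype U']
    [DecidableEq U'] [DecidableEq X] (q : E → X) (ψ : U → U') :
    fiberDeviation q (jointLaw W (ψ ∘ υ) Y) ≤ fiberDeviation q (jointLaw W υ Y) := by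
  refine sum_le_sum fun e _ ↦ ?_
  calc ∑ u', |jointLaw W (ψ ∘ υ) Y u' e - fiberMean q (jointLaw W (ψ ∘ υ) Y u') (q e)|
      = ∑ u', |∑ u with ψ u = u',
          (jointLaw W υ Y u e - fiberMean q (jointLaw W υ Y u) (q e))| := by
        simp only [sum_sub_distrib, ← fiberMean_sum, sum_filter_jointLaw]
    _ ≤ ∑ u', ∑ u with ψ u = u', |jointLaw W υ Y u e - fiberMean q (jointLaw W υ Y u) (q e)| := by
        gcongr; exact abs_sum_le_sum_abs _ _
    _ = ∑ u, |jointLaw W υ Y u e - fiberMean q (jointLaw W υ Y u) (q e)| :=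
        sum_fiberwise _ _ _

variable {W} in
lemma sum_abs_sum_jointLaw_sub_inv_card [Fintype U] [Fintype E] (hW : W.Nonempty) :
    ∑ e, |∑ u, jointLaw W υ Y u e - (Fintype.card E : ℝ)⁻¹| =
      fiberDeviation (fun _ ↦ ()) (jointLaw W (fun _ ↦ ()) Y) := by
  have hmarginal (e : E) : ∑ u, jointLaw W υ Y u e = jointLaw W (fun _ ↦ ()) Y () e := by
    simpa using sum_filter_jointLaw W υ Y (fun _ ↦ ()) () e
  have hmean : fiberMean (fun _ ↦ ()) (jointLaw W (fun _ ↦ ()) Y ()) () =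
      (Fintype.card E : ℝ)⁻¹ := by
    have h := sum_jointLaw_eq_one (fun _ ↦ ()) Y hW
    rw [univ_unique, sum_singleton] at h
    rw [fiberMean, expect_eq_sum_div_card]
    simpa using congrArg (· / (Fintype.card E : ℝ)) h
  simp [fiberDeviation, hmarginal, hmean]

variable {W} in
lemma fiberDeviation_jointLaw_le_sqrt [Fintype U] [Fintype E] {X : Type*} [DecidableEq X]
    (hW : W.Nonempty) (q : E → X) :
    fiberDeviation q (jointLaw W υ Y) ≤ √(4 * condDiv q (jointLaw W υ Y)) :=
  Real.le_sqrt_of_sq_le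
    (sq_fiberDeviation_le q (jointLaw_nonneg W υ Y) (sum_jointLaw_eq_one υ Y hW))

variable {W} in
lemma condDiv_jointLaw_nonneg [Fintype U] [Fintype E] {X : Type*} [DecidableEq X]
    (hW : W.Nonempty) (q : E → X) : 0 ≤ condDiv q (jointLaw W υ Y) :=
  condDiv_nonneg q (jointLaw_nonneg W υ Y) (sum_jointLaw_eq_one υ Y hW)

end JointLaw

section Entropy

lemma sum_log_div_card_le {ι : Type*} {s : Finset ι} {x : ι → ℝ} (hs : s.Nonempty)
    (hx : ∀ i ∈ s, 0 < x i) : (∑ i ∈ s, Real.log (x i)) / #s ≤ Real.log ((∑ i ∈ s, x i) / #s) := by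
  have hcard : (#s : ℝ) ≠ 0 := by exact_mod_cast hs.card_pos.ne'
  have h := strictConcaveOn_log_Ioi.concaveOn.le_map_sum (t := s) (w := fun _ ↦ (#s : ℝ)⁻¹) (p := x)
    (fun _ _ ↦ by positivity) (by simp [hcard]) hx
  simp only [smul_eq_mul, ← mul_sum] at h
  rwa [inv_mul_eq_div, inv_mul_eq_div] at h

variable {I E Θ K : Type*} [Fintype I] [DecidableEq I] [Fintype E] [DecidableEq Θ]

-- Given `Pi.map τ ω = t`, the coordinates of `ω` range independently over the fibres of the `τ i`.
lemma sum_prod_le_card_pow {τ : I → E → Θ} {ρ : I → (I → Θ) → E → ℝ}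
    (hρ₀ : ∀ i t e, 0 ≤ ρ i t e)
    (hρ : ∀ i t, ∑ e with τ i e = t i, ρ i t e ≤ #{e | τ i e = t i}) :
    ∑ ω : I → E, ∏ i, ρ i (Pi.map τ ω) (ω i) ≤ (Fintype.card E : ℝ) ^ Fintype.card I := by
  have hfiber (t : I → Θ) : ({ω | Pi.map τ ω = t} : Finset (I → E)) =
      Fintype.piFinset fun i ↦ {e | τ i e = t i} := by
    ext ω; simp [funext_iff]
  have hmaps : ∀ ω ∈ (univ : Finset (I → E)), Pi.map τ ω ∈ univ.image (Pi.map τ) :=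
    fun ω hω ↦ mem_image_of_mem _ hω
  calc ∑ ω : I → E, ∏ i, ρ i (Pi.map τ ω) (ω i)
      = ∑ t ∈ univ.image (Pi.map τ), ∑ ω with Pi.map τ ω = t, ∏ i, ρ i t (ω i) := by
        rw [← sum_fiberwise_of_maps_to hmaps]
        exact sum_congr rfl fun t _ ↦ sum_congr rfl fun ω hω ↦ by rw [(mem_filter.1 hω).2]
    _ = ∑ t ∈ univ.image (Pi.map τ), ∏ i, ∑ e with τ i e = t i, ρ i t e := by
        simp only [hfiber, prod_univ_sum]
    _ ≤ ∑ t ∈ univ.image (Pi.map τ), ∏ i, (#{e | τ i e = t i} : ℝ) := by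
        gcongr with t _ i
        · exact fun i _ ↦ sum_nonneg fun e _ ↦ hρ₀ i t e
        · exact hρ i t
    _ = ∑ t ∈ univ.image (Pi.map τ), ∑ ω with Pi.map τ ω = t, 1 := by
        simp [hfiber, Fintype.card_piFinset]
    _ = (Fintype.card E : ℝ) ^ Fintype.card I := by
        rw [sum_fiberwise_of_maps_to hmaps]; simp

variable [Fintype Θ] [DecidableEq E] [Fintype K] [DecidableEq K]

-- The chain rule for relative entropy, with `log (|K| |E| ^ |I| / |W|)` as the total budget.
lemma sum_condDiv_le_log (τ : I → E → Θ) (g : (I → E) → K) {W : Finset (I → E)} (hW : W.Nonempty) :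
    ∑ i, condDiv (τ i) (jointLaw W (fun ω ↦ (Pi.map τ ω, g ω)) (eval i)) ≤
      Real.log (Fintype.card K * (Fintype.card E : ℝ) ^ Fintype.card I / #W) := by
  set υ := fun ω : I → E ↦ (Pi.map τ ω, g ω)
  set ρ : I → (I → Θ) × K → E → ℝ := fun i u e ↦ jointLaw W υ (eval i) u e /
    fiberMean (τ i) (jointLaw W υ (eval i) u) (u.1 i)
  have hρ₀ (i : I) (u : (I → Θ) × K) (e : E) : 0 ≤ ρ i u e :=
    div_nonneg (jointLaw_nonneg ..) (fiberMean_nonneg _ (jointLaw_nonneg W υ (eval i) u) _)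
  have hρpos : ∀ ω ∈ W, ∀ i, 0 < ρ i (υ ω) (ω i) := fun ω hω i ↦
    have hpos := jointLaw_pos W υ (eval i) hω
    div_pos hpos (fiberMean_pos (τ i) (jointLaw_nonneg W υ (eval i) (υ ω)) hpos)
  have hprod : ∑ ω ∈ W, ∏ i, ρ i (υ ω) (ω i) ≤
      Fintype.card K * (Fintype.card E : ℝ) ^ Fintype.card I := by
    calc ∑ ω ∈ W, ∏ i, ρ i (υ ω) (ω i)
        ≤ ∑ ω ∈ W, ∑ k, ∏ i, ρ i (Pi.map τ ω, k) (ω i) :=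
          sum_le_sum fun ω _ ↦ single_le_sum (f := fun k ↦ ∏ i, ρ i (Pi.map τ ω, k) (ω i))
            (fun k _ ↦ prod_nonneg fun i _ ↦ hρ₀ ..) (mem_univ (g ω))
      _ ≤ ∑ ω, ∑ k, ∏ i, ρ i (Pi.map τ ω, k) (ω i) :=
          sum_le_univ_sum_of_nonneg fun ω ↦ sum_nonneg fun k _ ↦ prod_nonneg fun i _ ↦ hρ₀ ..
      _ = ∑ k, ∑ ω, ∏ i, ρ i (Pi.map τ ω, k) (ω i) := sum_comm
      _ ≤ ∑ _k : K, (Fintype.card E : ℝ) ^ Fintype.card I :=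
          sum_le_sum fun k _ ↦ sum_prod_le_card_pow (fun i t ↦ hρ₀ i (t, k))
            fun i t ↦ sum_div_fiberMean_le (τ i) (jointLaw W υ (eval i) (t, k)) (t i)
      _ = Fintype.card K * (Fintype.card E : ℝ) ^ Fintype.card I := by simp
  have hcoord (i : I) : condDiv (τ i) (jointLaw W υ (eval i)) =
      (∑ ω ∈ W, Real.log (ρ i (υ ω) (ω i))) / #W :=
    sum_jointLaw_mul W υ (eval i) fun u e ↦
      Real.log (jointLaw W υ (eval i) u e / fiberMean (τ i) (jointLaw W υ (eval i) u) (τ i e))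
  calc ∑ i, condDiv (τ i) (jointLaw W υ (eval i))
      = (∑ ω ∈ W, Real.log (∏ i, ρ i (υ ω) (ω i))) / #W := by
        rw [sum_congr rfl fun ω hω ↦ Real.log_prod fun i _ ↦ (hρpos ω hω i).ne', sum_comm, sum_div]
        exact sum_congr rfl fun i _ ↦ hcoord i
    _ ≤ Real.log ((∑ ω ∈ W, ∏ i, ρ i (υ ω) (ω i)) / #W) :=
        sum_log_div_card_le hW fun ω hω ↦ prod_pos fun i _ ↦ hρpos ω hω i
    _ ≤ Real.log (Fintype.card K * (Fintype.card E : ℝ) ^ Fintype.card I / #W) := by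
        refine Real.log_le_log ?_ (by gcongr)
        exact div_pos (sum_pos (fun ω hω ↦ prod_pos fun i _ ↦ hρpos ω hω i) hW)
          (by exact_mod_cast hW.card_pos)

end Entropy

lemma fiberDeviation_injective_comp {R U X Y : Type*} [Fintype R] [Fintype U] [DecidableEq X]
    [DecidableEq Y] {g : X → Y} (hg : Injective g) (q : R → X) (B : U → R → ℝ) :
    fiberDeviation (g ∘ q) B = fiberDeviation q B := by
  simp [fiberDeviation, fiberMean, hg.eq_iff]

section ConditionalIndependence

lemma card_mul_card_filter_and_of_mix {Ω : Type*} {F : Finset Ω} {mix : Ω → Ω → Ω}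
    {p q : Ω → Prop} [DecidablePred p] [DecidablePred q]
    (hmix : ∀ ω ω', mix (mix ω ω') (mix ω' ω) = ω) (hF : ∀ ω ∈ F, ∀ ω' ∈ F, mix ω ω' ∈ F)
    (hp : ∀ ω ∈ F, ∀ ω' ∈ F, p (mix ω ω') ↔ p ω) (hq : ∀ ω ∈ F, ∀ ω' ∈ F, q (mix ω ω') ↔ q ω') :
    #F * #{ω ∈ F | p ω ∧ q ω} = #{ω ∈ F | p ω} * #{ω ∈ F | q ω} := by
  rw [← card_product, ← card_product]
  refine card_nbij' (fun z ↦ (mix z.2 z.1, mix z.1 z.2)) (fun z ↦ (mix z.2 z.1, mix z.1 z.2))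
    (fun z hz ↦ ?_) (fun z hz ↦ ?_) (fun z _ ↦ by simp [hmix]) (fun z _ ↦ by simp [hmix])
  · simp only [coe_product, Set.mem_prod, coe_filter, Set.mem_ofPred_eq, SetLike.mem_coe] at hz ⊢
    rw [hp _ hz.2.1 _ hz.1, hq _ hz.1 _ hz.2.1]
    exact ⟨⟨hF _ hz.2.1 _ hz.1, hz.2.2.1⟩, hF _ hz.1 _ hz.2.1, hz.2.2.2⟩
  · simp only [coe_product, Set.mem_prod, coe_filter, Set.mem_ofPred_eq, SetLike.mem_coe] at hz ⊢
    rw [hp _ hz.1.1 _ hz.2.1, hq _ hz.1.1 _ hz.2.1]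
    exact ⟨hF _ hz.2.1 _ hz.1.1, hF _ hz.1.1 _ hz.2.1, hz.1.2, hz.2.2⟩

variable {J R Θ Q₁ Q₂ : Type*} [Fintype J] [DecidableEq J] [Fintype R] [DecidableEq Θ]
  {τ : J → R → Θ} {f₁ : R → Q₁} {f₂ : R → Q₂}

-- Where `τ j` determines `f₁`, exchanging the `j`-th coordinates of two seed vectors with equal
-- `τ`-values is invisible to the first prover; elsewhere it is invisible to the second prover.
lemma card_mul_card_filter_comp_and_comp
    (hτ : ∀ j, f₁.FactorsThrough (τ j) ∨ f₂.FactorsThrough (τ j)) (t : J → Θ)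
    (p : (J → Q₁) → Prop) (q : (J → Q₂) → Prop) [DecidablePred p] [DecidablePred q] :
    #{ω | Pi.map τ ω = t} * #{ω | Pi.map τ ω = t ∧ p (f₁ ∘ ω) ∧ q (f₂ ∘ ω)} =
      #{ω | Pi.map τ ω = t ∧ p (f₁ ∘ ω)} * #{ω | Pi.map τ ω = t ∧ q (f₂ ∘ ω)} := by
  classical
  let mix (ω ω' : J → R) : J → R := {j | f₁.FactorsThrough (τ j)}.piecewise ω' ω
  have hmix_τ {ω ω' : J → R} (hω : Pi.map τ ω = t) (hω' : Pi.map τ ω' = t) :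
      Pi.map τ (mix ω ω') = t := by
    ext j
    by_cases hj : f₁.FactorsThrough (τ j)
    · simpa [mix, Set.piecewise, hj] using congrFun hω' j
    · simpa [mix, Set.piecewise, hj] using congrFun hω j
  have hmix_fst {ω ω' : J → R} (h : Pi.map τ ω = Pi.map τ ω') : f₁ ∘ mix ω ω' = f₁ ∘ ω := by
    ext j
    by_cases hj : f₁.FactorsThrough (τ j)
    · simpa [mix, Set.piecewise, hj] using hj (congrFun h.symm j)
    · simp [mix, Set.piecewise, hj]
  have hmix_snd {ω ω' : J → R} (h : Pi.map τ ω = Pi.map τ ω') : f₂ ∘ mix ω ω' = f₂ ∘ ω' := by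
    ext j
    by_cases hj : f₁.FactorsThrough (τ j)
    · simp [mix, Set.piecewise, hj]
    · simpa [mix, Set.piecewise, hj] using (hτ j).resolve_left hj (congrFun h j)
  simp only [← filter_filter (fun ω : J → R ↦ Pi.map τ ω = t)]
  refine card_mul_card_filter_and_of_mix (mix := mix) (fun ω ω' ↦ ?_) ?_ ?_ ?_
  · ext j; by_cases hj : f₁.FactorsThrough (τ j) <;> simp [mix, Set.piecewise, hj]
  all_goals simp only [mem_filter_univ]; intro ω hω ω' hω'
  · exact hmix_τ hω hω'
  · rw [hmix_fst (hω.trans hω'.symm)]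
  · rw [hmix_snd (hω.trans hω'.symm)]

variable {A₁ A₂ : Type*} [Fintype A₁] [Fintype A₂] [DecidableEq A₁] [DecidableEq A₂]

lemma card_filter_apply_eq_card_mul_acceptProb {Ω : Type*} {F : Finset Ω} {X : Ω → A₁}
    {Y : Ω → A₂} {p : A₁ → ℝ} {q : A₂ → ℝ}
    (h : ∀ a b, (#{ω ∈ F | X ω = a ∧ Y ω = b} : ℝ) = #F * (p a * q b)) (v : A₁ → A₂ → Bool) :
    (#{ω ∈ F | v (X ω) (Y ω)} : ℝ) = #F * acceptProb v p q := by
  simp only [acceptProb, mul_sum, ← h]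
  norm_cast
  rw [card_eq_sum_card_fiberwise (f := X) fun _ _ ↦ mem_coe.2 (mem_univ _)]
  refine sum_congr rfl fun a _ ↦ ?_
  have hmaps : Set.MapsTo Y ({ω ∈ {ω ∈ F | v (X ω) (Y ω)} | X ω = a} : Finset Ω)
      ({b | v a b} : Finset A₂) := fun ω hω ↦ by
    simp only [coe_filter, mem_filter, Set.mem_ofPred_eq] at hω
    simpa [← hω.2] using hω.1.2
  rw [card_eq_sum_card_fiberwise hmaps]
  refine sum_congr rfl fun b hb ↦ congrArg card ?_
  ext ω
  have hb := (mem_filter.1 hb).2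
  simp only [mem_filter]
  constructor
  · exact fun h ↦ ⟨h.1.1.1, h.1.2, h.2⟩
  · rintro ⟨hω, rfl, rfl⟩
    exact ⟨⟨⟨hω, hb⟩, rfl⟩, rfl⟩

lemma exists_mem_stdSimplex_card_filter_eq {Ω A : Type*} [Fintype A] [Nonempty A] [DecidableEq A]
    (F : Finset Ω) (X : Ω → A) :
    ∃ p ∈ stdSimplex ℝ A, ∀ a, (#{ω ∈ F | X ω = a} : ℝ) = #F * p a := by
  have hF : (#F : ℝ) = ∑ a, (#{ω ∈ F | X ω = a} : ℝ) := by
    exact_mod_cast card_eq_sum_card_fiberwise fun ω _ ↦ mem_coe.2 (mem_univ (X ω))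
  rw [hF]
  exact exists_mem_stdSimplex_mul_eq fun a ↦ by positivity

lemma card_filter_comp_eq_card_mul_acceptProb
    (hτ : ∀ j, f₁.FactorsThrough (τ j) ∨ f₂.FactorsThrough (τ j)) (t : J → Θ)
    (p : (J → Q₁) → Prop) (q : (J → Q₂) → Prop) [DecidablePred p] [DecidablePred q]
    {X : (J → Q₁) → A₁} {Y : (J → Q₂) → A₂} {α : A₁ → ℝ} {β : A₂ → ℝ}
    (hα : ∀ a, (#{ω | Pi.map τ ω = t ∧ p (f₁ ∘ ω) ∧ X (f₁ ∘ ω) = a} : ℝ) =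
      #{ω | Pi.map τ ω = t ∧ p (f₁ ∘ ω)} * α a)
    (hβ : ∀ b, (#{ω | Pi.map τ ω = t ∧ q (f₂ ∘ ω) ∧ Y (f₂ ∘ ω) = b} : ℝ) =
      #{ω | Pi.map τ ω = t ∧ q (f₂ ∘ ω)} * β b) (v : A₁ → A₂ → Bool) :
    (#{ω ∈ {ω | Pi.map τ ω = t ∧ p (f₁ ∘ ω) ∧ q (f₂ ∘ ω)} | v (X (f₁ ∘ ω)) (Y (f₂ ∘ ω))} : ℝ) =
      #{ω | Pi.map τ ω = t ∧ p (f₁ ∘ ω) ∧ q (f₂ ∘ ω)} * acceptProb v α β := by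
  refine card_filter_apply_eq_card_mul_acceptProb (fun a b ↦ ?_) v
  obtain hC | hC := (Finset.card ({ω | Pi.map τ ω = t} : Finset (J → R))).eq_zero_or_pos
  · have hempty (ω : J → R) : Pi.map τ ω ≠ t :=
      filter_eq_empty_iff.1 (card_eq_zero.1 hC) (mem_univ ω)
    simp [hempty]
  have hind := congrArg (Nat.cast : ℕ → ℝ) (card_mul_card_filter_comp_and_comp hτ t p q)
  have hind_ab := congrArg (Nat.cast : ℕ → ℝ) (card_mul_card_filter_comp_and_comp hτ t
    (fun x ↦ p x ∧ X x = a) (fun y ↦ q y ∧ Y y = b))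
  push_cast at hind hind_ab
  rw [hα, hβ, mul_mul_mul_comm, ← hind] at hind_ab
  rw [filter_filter]
  refine mul_left_cancel₀ (Nat.cast_ne_zero.2 hC.ne') ?_
  rw [← mul_assoc, ← hind_ab]
  simp only [and_assoc, and_left_comm]

end ConditionalIndependence

section Game

variable {I R Θ Q₁ Q₂ A₁ A₂ : Type*} [DecidableEq I]

lemma comp_funSplitAt_symm {Q : Type*} (i : I) (g : R → Q) (r : R) (ω : {j // j ≠ i} → R) :
    g ∘ (Equiv.funSplitAt i R).symm (r, ω) = (Equiv.funSplitAt i Q).symm (g r, g ∘ ω) := by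
  ext j; by_cases hj : j = i <;> simp [hj]

lemma card_filter_eval_eq_and [Fintype I] [Fintype R] [DecidableEq R] (i : I) (r : R)
    (p : (I → R) → Prop) [DecidablePred p] :
    #{ω | ω i = r ∧ p ω} =
      #{ω : {j // j ≠ i} → R | p ((Equiv.funSplitAt i R).symm (r, ω))} := by
  have hsplit (ω : I → R) : (Equiv.funSplitAt i R).symm (ω i, (Equiv.funSplitAt i R ω).2) = ω :=
    (Equiv.funSplitAt i R).symm_apply_apply ω
  refine card_nbij' (fun ω ↦ (Equiv.funSplitAt i R ω).2)
    (fun ω ↦ (Equiv.funSplitAt i R).symm (r, ω)) (fun ω hω ↦ ?_) (fun ω hω ↦ ?_) (fun ω hω ↦ ?_)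
    fun ω _ ↦ congrArg Prod.snd ((Equiv.funSplitAt i R).apply_symm_apply (r, ω))
  · obtain ⟨rfl, hω⟩ := (mem_filter_univ _).1 hω
    exact (mem_filter_univ _).2 (by rwa [hsplit])
  · have hω := (mem_filter_univ _).1 hω
    exact (mem_filter_univ _).2
      ⟨congrArg Prod.fst ((Equiv.funSplitAt i R).apply_symm_apply (r, ω)), hω⟩
  · obtain ⟨rfl, -⟩ := (mem_filter_univ _).1 hω
    exact hsplit ω

variable (f : R → Q₁ × Q₂) (V : R → A₁ → A₂ → Bool) (P₁ : (I → Q₁) → I → A₁)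
  (P₂ : (I → Q₂) → I → A₂)

/-- The answers of both provers in the coordinates in `S`. -/
def answers (S : Finset I) (ω : I → R) : (S → A₁) × (S → A₂) :=
  (S.restrict (P₁ (Prod.fst ∘ f ∘ ω)), S.restrict (P₂ (Prod.snd ∘ f ∘ ω)))

/-- What both provers are conditioned on when they play coordinate `i`: the value `τ j (ω j)` for
every other coordinate `j`, and all answers in the coordinates in `S`. -/
def restView (τ : I → R → Θ) (S : Finset I) (i : I) (ω : I → R) :
    ({j // j ≠ i} → Θ) × (S → A₁) × (S → A₂) :=
  (fun j ↦ τ j (ω j), answers f P₁ P₂ S ω)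

variable {f V P₁ P₂} {τ : I → R → Θ} {S : Finset I} {i : I}

lemma restView_funSplitAt_symm_eq_iff (r : R) (ω : {j // j ≠ i} → R)
    (u : ({j // j ≠ i} → Θ) × (S → A₁) × (S → A₂)) :
    restView f P₁ P₂ τ S i ((Equiv.funSplitAt i R).symm (r, ω)) = u ↔
      Pi.map (fun j : {j // j ≠ i} ↦ τ j) ω = u.1 ∧
      S.restrict (P₁ ((Equiv.funSplitAt i Q₁).symm ((f r).1, (Prod.fst ∘ f) ∘ ω))) = u.2.1 ∧
      S.restrict (P₂ ((Equiv.funSplitAt i Q₂).symm ((f r).2, (Prod.snd ∘ f) ∘ ω))) = u.2.2 := by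
  have hτ : (fun j : {j // j ≠ i} ↦ τ j ((Equiv.funSplitAt i R).symm (r, ω) j)) =
      Pi.map (fun j : {j // j ≠ i} ↦ τ j) ω := by
    ext j; simp [j.2]
  simp only [restView, answers, ← comp_assoc, comp_funSplitAt_symm, Prod.ext_iff, hτ]

variable [Fintype I] [Fintype R]

variable (f V P₁ P₂) in
/-- The seed vectors on which the strategies `P₁` and `P₂` for the repeated game win every
coordinate in `S`. -/
def winSet (S : Finset I) : Finset (I → R) :=
  {ω | ∀ j ∈ S, V (ω j) (P₁ (Prod.fst ∘ f ∘ ω) j) (P₂ (Prod.snd ∘ f ∘ ω) j)}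

lemma winSet_empty : winSet f V P₁ P₂ ∅ = univ := by
  simp [winSet]

lemma winSet_anti {T : Finset I} (h : S ⊆ T) : winSet f V P₁ P₂ T ⊆ winSet f V P₁ P₂ S :=
  monotone_filter_right _ fun _ _ hω j hj ↦ hω j (h hj)

lemma winSet_insert :
    winSet f V P₁ P₂ (insert i S) =
      {ω ∈ winSet f V P₁ P₂ S | V (ω i) (P₁ (Prod.fst ∘ f ∘ ω) i) (P₂ (Prod.snd ∘ f ∘ ω) i)} := by
  ext ω; simp [winSet, and_comm]

lemma mem_winSet_of_restView_eq (hi : i ∉ S) (hτS : ∀ j ∈ S, Injective (τ j)) {ω₀ ω : I → R}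
    (hω₀ : ω₀ ∈ winSet f V P₁ P₂ S)
    (h : restView f P₁ P₂ τ S i ω = restView f P₁ P₂ τ S i ω₀) : ω ∈ winSet f V P₁ P₂ S := by
  obtain ⟨hτ, hans⟩ := Prod.ext_iff.1 h
  obtain ⟨h₁, h₂⟩ := Prod.ext_iff.1 hans
  refine (mem_filter_univ _).2 fun j hj ↦ ?_
  have hωj : ω j = ω₀ j := hτS j hj (congrFun hτ ⟨j, ne_of_mem_of_not_mem hj hi⟩)
  have h₁j : P₁ (Prod.fst ∘ f ∘ ω) j = P₁ (Prod.fst ∘ f ∘ ω₀) j := congrFun h₁ ⟨j, hj⟩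
  have h₂j : P₂ (Prod.snd ∘ f ∘ ω) j = P₂ (Prod.snd ∘ f ∘ ω₀) j := congrFun h₂ ⟨j, hj⟩
  rw [hωj, h₁j, h₂j]
  exact (mem_filter_univ _).1 hω₀ j hj

variable [DecidableEq R] [DecidableEq Θ] [DecidableEq A₁] [DecidableEq A₂]

lemma filter_winSet_restView_eq (hi : i ∉ S) (hτS : ∀ j ∈ S, Injective (τ j)) {ω₀ : I → R}
    (hω₀ : ω₀ ∈ winSet f V P₁ P₂ S) (r : R) :
    {ω ∈ winSet f V P₁ P₂ S | restView f P₁ P₂ τ S i ω = restView f P₁ P₂ τ S i ω₀ ∧ ω i = r} =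
      ({ω | ω i = r ∧ restView f P₁ P₂ τ S i ω = restView f P₁ P₂ τ S i ω₀} : Finset _) := by
  ext ω
  simp only [mem_filter, mem_univ, true_and]
  exact ⟨fun h ↦ h.2.symm, fun h ↦ ⟨mem_winSet_of_restView_eq hi hτS hω₀ h.2, h.symm⟩⟩

variable [Fintype A₁] [Nonempty A₁] [Fintype A₂] [Nonempty A₂]

lemma exists_card_filter_winSet_eq_card_mul_acceptProb (hi : i ∉ S)
    (hτS : ∀ j ∈ S, Injective (τ j))
    (hτ : ∀ j ≠ i, (Prod.fst ∘ f).FactorsThrough (τ j) ∨ (Prod.snd ∘ f).FactorsThrough (τ j)) :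
    ∃ (α : ({j // j ≠ i} → Θ) × (S → A₁) × (S → A₂) → Q₁ → A₁ → ℝ)
      (β : ({j // j ≠ i} → Θ) × (S → A₁) × (S → A₂) → Q₂ → A₂ → ℝ),
      (∀ u x, α u x ∈ stdSimplex ℝ A₁) ∧ (∀ u y, β u y ∈ stdSimplex ℝ A₂) ∧
      ∀ u r, (#{ω ∈ winSet f V P₁ P₂ S | (restView f P₁ P₂ τ S i ω = u ∧ ω i = r) ∧
          V r (P₁ (Prod.fst ∘ f ∘ ω) i) (P₂ (Prod.snd ∘ f ∘ ω) i)} : ℝ) =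
        #{ω ∈ winSet f V P₁ P₂ S | restView f P₁ P₂ τ S i ω = u ∧ ω i = r} *
          acceptProb (V r) (α u (f r).1) (β u (f r).2) := by
  let τ' (j : {j // j ≠ i}) : R → Θ := τ j
  let G₁ (x : Q₁) (y : {j // j ≠ i} → Q₁) : I → A₁ := P₁ ((Equiv.funSplitAt i Q₁).symm (x, y))
  let G₂ (x : Q₂) (y : {j // j ≠ i} → Q₂) : I → A₂ := P₂ ((Equiv.funSplitAt i Q₂).symm (x, y))
  choose α hα hα' using fun (u : ({j // j ≠ i} → Θ) × (S → A₁) × (S → A₂)) x ↦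
    exists_mem_stdSimplex_card_filter_eq
      {ω | Pi.map τ' ω = u.1 ∧ S.restrict (G₁ x ((Prod.fst ∘ f) ∘ ω)) = u.2.1}
      fun ω ↦ G₁ x ((Prod.fst ∘ f) ∘ ω) i
  choose β hβ hβ' using fun (u : ({j // j ≠ i} → Θ) × (S → A₁) × (S → A₂)) x ↦
    exists_mem_stdSimplex_card_filter_eq
      {ω | Pi.map τ' ω = u.1 ∧ S.restrict (G₂ x ((Prod.snd ∘ f) ∘ ω)) = u.2.2}
      fun ω ↦ G₂ x ((Prod.snd ∘ f) ∘ ω) i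
  refine ⟨α, β, hα, hβ, fun u r ↦ ?_⟩
  obtain hempty | ⟨ω₀, hω₀⟩ :=
    {ω ∈ winSet f V P₁ P₂ S | restView f P₁ P₂ τ S i ω = u ∧ ω i = r}.eq_empty_or_nonempty
  · rw [← filter_filter, hempty]; simp
  obtain ⟨hω₀W, rfl, rfl⟩ := mem_filter.1 hω₀
  have h := card_filter_comp_eq_card_mul_acceptProb (τ := τ') (fun j ↦ hτ j j.2)
    (restView f P₁ P₂ τ S i ω₀).1
    (fun y ↦ S.restrict (G₁ (f (ω₀ i)).1 y) = (restView f P₁ P₂ τ S i ω₀).2.1)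
    (fun y ↦ S.restrict (G₂ (f (ω₀ i)).2 y) = (restView f P₁ P₂ τ S i ω₀).2.2)
    (X := fun y ↦ G₁ (f (ω₀ i)).1 y i) (Y := fun y ↦ G₂ (f (ω₀ i)).2 y i)
    (fun a ↦ by simpa only [filter_filter, and_assoc] using hα' _ _ a)
    (fun b ↦ by simpa only [filter_filter, and_assoc] using hβ' _ _ b) (V (ω₀ i))
  rw [← filter_filter, filter_winSet_restView_eq hi hτS hω₀W, filter_filter]
  simp only [and_assoc, card_filter_eval_eq_and, restView_funSplitAt_symm_eq_iff,
    ← comp_assoc, comp_funSplitAt_symm]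
  simp only [filter_filter, and_assoc] at h
  exact h

end Game

section Round

variable {I : Type*} [DecidableEq I]

lemma sum_update_bool [Fintype I] (g : (I → Bool) → ℝ) (i : I) :
    ∑ D, (g (update D i true) + g (update D i false)) = 2 * ∑ D, g D := by
  have hflip : Involutive fun D : I → Bool ↦ update D i !D i := fun D ↦ by simp
  have hpair (D : I → Bool) :
      g (update D i true) + g (update D i false) = g D + g (update D i !D i) := by
    cases h : D i
    · rw [← h, update_eq_self, h, add_comm]; rfl
    · rw [← h, update_eq_self, h]; rfl
  rw [sum_congr rfl fun D _ ↦ hpair D, sum_add_distrib, two_mul]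
  exact congrArg _ (Equiv.sum_comp hflip.toPerm g)

lemma exists_update_le [Finite I] {T : Finset I} (hT : T.Nonempty) {κ : (I → Bool) → I → ℝ}
    {μ : I → ℝ} (hκ₀ : ∀ D i, 0 ≤ κ D i) (hμ₀ : ∀ i, 0 ≤ μ i) {L : ℝ}
    (hκ : ∀ D, ∑ i ∈ T, κ D i ≤ L) (hμ : ∑ i ∈ T, μ i ≤ L) :
    ∃ i ∈ T, ∃ D, κ (update D i true) i ≤ 3 * L / #T ∧ κ (update D i false) i ≤ 3 * L / #T ∧
      μ i ≤ 3 * L / #T := by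
  have := Fintype.ofFinite I
  have hsum : ∑ i ∈ T, ∑ D, (κ (update D i true) i + κ (update D i false) i + μ i) ≤
      ∑ _i ∈ T, ∑ _D : I → Bool, 3 * L / #T := by
    have hT₀ : (#T : ℝ) ≠ 0 := by exact_mod_cast hT.card_pos.ne'
    calc ∑ i ∈ T, ∑ D, (κ (update D i true) i + κ (update D i false) i + μ i)
        = ∑ i ∈ T, (2 * ∑ D, κ D i + ∑ _D : I → Bool, μ i) :=
          sum_congr rfl fun i _ ↦ by rw [sum_add_distrib, sum_update_bool fun D ↦ κ D i]
      _ = 2 * ∑ D, ∑ i ∈ T, κ D i + ∑ _D : I → Bool, ∑ i ∈ T, μ i := by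
          rw [sum_add_distrib, ← mul_sum, sum_comm, sum_comm (f := fun i _ ↦ μ i)]
      _ ≤ 2 * ∑ _D : I → Bool, L + ∑ _D : I → Bool, L := by
          gcongr with D; exact hκ D
      _ = ∑ _i ∈ T, ∑ _D : I → Bool, 3 * L / #T := by
          simp only [sum_const, nsmul_eq_mul]
          field_simp
          ring
  obtain ⟨i, hi, hle⟩ := exists_le_of_sum_le hT hsum
  obtain ⟨D, -, hD⟩ := exists_le_of_sum_le univ_nonempty hle
  refine ⟨i, hi, D, ?_, ?_, ?_⟩ <;>
    linarith [hκ₀ (update D i true) i, hκ₀ (update D i false) i, hμ₀ i]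

variable {R Θ Q₁ Q₂ A₁ A₂ : Type}

/-- The part of the seed of coordinate `j` that both provers are shown in advance: everything if
`j ∈ S`, and otherwise the query to the prover that `D j` selects. -/
def revealed (f : R → Q₁ × Q₂) (S : Finset I) (D : I → Bool) (j : I) (r : R) : R ⊕ Q₁ ⊕ Q₂ :=
  if j ∈ S then .inl r else .inr (if D j then .inl (f r).1 else .inr (f r).2)

variable {f : R → Q₁ × Q₂} {S : Finset I} {i : I}

lemma revealed_injective (D : I → Bool) {j : I} (hj : j ∈ S) : Injective (revealed f S D j) :=
  fun r r' h ↦ by simpa [revealed, hj] using h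

lemma factorsThrough_revealed (D : I → Bool) (j : I) :
    (Prod.fst ∘ f).FactorsThrough (revealed f S D j) ∨
      (Prod.snd ∘ f).FactorsThrough (revealed f S D j) := by
  by_cases hj : j ∈ S
  · exact .inl fun r r' h ↦ by rw [revealed_injective D hj h]
  cases hD : D j
  · exact .inr fun r r' h ↦ by simpa [revealed, hj, hD] using h
  · exact .inl fun r r' h ↦ by simpa [revealed, hj, hD] using h

variable {P₁ : (I → Q₁) → I → A₁} {P₂ : (I → Q₂) → I → A₂}

lemma restView_revealed_update (D : I → Bool) (b : Bool) :
    restView f P₁ P₂ (revealed f S (update D i b)) S i =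
      restView f P₁ P₂ (revealed f S D) S i := by
  ext ω : 1
  simp only [restView, revealed]
  congr 1
  ext j : 1
  rw [update_of_ne j.2]

variable [Fintype R] [DecidableEq R] [DecidableEq Q₁] [DecidableEq Q₂]

lemma fiberDeviation_revealed_update_true {U : Type*} [Fintype U] (hi : i ∉ S) (D : I → Bool)
    (B : U → R → ℝ) :
    fiberDeviation (revealed f S (update D i true) i) B = fiberDeviation (Prod.fst ∘ f) B := by
  have h : revealed f S (update D i true) i = (Sum.inr ∘ Sum.inl) ∘ Prod.fst ∘ f := by
    ext r; simp [revealed, hi]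
  rw [h, fiberDeviation_injective_comp (Sum.inr_injective.comp Sum.inl_injective)]

lemma fiberDeviation_revealed_update_false {U : Type*} [Fintype U] (hi : i ∉ S) (D : I → Bool)
    (B : U → R → ℝ) :
    fiberDeviation (revealed f S (update D i false) i) B = fiberDeviation (Prod.snd ∘ f) B := by
  have h : revealed f S (update D i false) i = (Sum.inr ∘ Sum.inr) ∘ Prod.snd ∘ f := by
    ext r; simp [revealed, hi]
  rw [h, fiberDeviation_injective_comp (Sum.inr_injective.comp Sum.inr_injective)]

end Round

section Step

lemma card_filter_eq_sum_sum {Ω U E : Type*} [Fintype U] [DecidableEq U] [Fintype E] [DecidableEq E]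
    (W : Finset Ω) (υ : Ω → U) (Y : Ω → E) (p : E → Ω → Prop) [∀ e, DecidablePred (p e)]
    [DecidablePred fun ω ↦ p (Y ω) ω] :
    #{ω ∈ W | p (Y ω) ω} = ∑ e, ∑ u, #{ω ∈ W | (υ ω = u ∧ Y ω = e) ∧ p e ω} := by
  rw [card_eq_sum_card_fiberwise (f := Y) fun _ _ ↦ mem_coe.2 (mem_univ _)]
  refine sum_congr rfl fun e _ ↦ ?_
  rw [card_eq_sum_card_fiberwise (f := υ) fun _ _ ↦ mem_coe.2 (mem_univ _)]
  refine sum_congr rfl fun u _ ↦ congrArg card ?_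
  ext ω
  simp only [mem_filter]
  constructor
  · rintro ⟨⟨⟨hω, hp⟩, rfl⟩, rfl⟩
    exact ⟨hω, ⟨rfl, rfl⟩, hp⟩
  · rintro ⟨hω, ⟨rfl, rfl⟩, hp⟩
    exact ⟨⟨⟨hω, hp⟩, rfl⟩, rfl⟩

variable {R Q₁ Q₂ A₁ A₂ : Type} [Fintype R] [DecidableEq R] [Fintype A₁] [Fintype A₂]
  {f : R → Q₁ × Q₂}

section

variable [Nonempty R] [Fintype Q₁] [DecidableEq Q₁] [Fintype Q₂] [DecidableEq Q₂] [Nonempty A₁]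
  [Nonempty A₂] {V : R → A₁ → A₂ → Bool}

lemma card_filter_div_card_le_gameValue_add {Ω U : Type*} [Fintype U] [Nonempty U]
    [DecidableEq U] {W : Finset Ω} (hW : W.Nonempty) {υ : Ω → U} {Y : Ω → R} {a : Ω → A₁}
    {b : Ω → A₂} {α : U → Q₁ → A₁ → ℝ} (hα : ∀ u x, α u x ∈ stdSimplex ℝ A₁)
    {β : U → Q₂ → A₂ → ℝ} (hβ : ∀ u y, β u y ∈ stdSimplex ℝ A₂)
    (hαβ : ∀ u r, (#{ω ∈ W | (υ ω = u ∧ Y ω = r) ∧ V r (a ω) (b ω)} : ℝ) =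
      #{ω ∈ W | υ ω = u ∧ Y ω = r} * acceptProb (V r) (α u (f r).1) (β u (f r).2)) {δ : ℝ}
    (h₁ : fiberDeviation (Prod.fst ∘ f) (jointLaw W υ Y) ≤ δ)
    (h₂ : fiberDeviation (Prod.snd ∘ f) (jointLaw W υ Y) ≤ δ)
    (h : fiberDeviation (fun _ ↦ ()) (jointLaw W (fun _ ↦ ()) Y) ≤ δ) :
    (#{ω ∈ W | V (Y ω) (a ω) (b ω)} : ℝ) / #W ≤ gameValue f V + 10 * δ := by
  rw [← sum_abs_sum_jointLaw_sub_inv_card υ Y hW] at h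
  calc (#{ω ∈ W | V (Y ω) (a ω) (b ω)} : ℝ) / #W
      = ∑ r, ∑ u, jointLaw W υ Y u r * acceptProb (V r) (α u (f r).1) (β u (f r).2) := by
        rw [card_filter_eq_sum_sum W υ Y fun r ω ↦ (V r (a ω) (b ω) : Prop)]
        push_cast
        simp only [hαβ, sum_div, jointLaw, div_mul_eq_mul_div]
    _ ≤ gameValue f V + 10 * δ :=
        sum_mul_acceptProb_le_gameValue_add f V hα hβ (jointLaw_nonneg W υ Y) h₁ h₂ h

end

variable {I Θ : Type*} [Fintype I] [DecidableEq I] [DecidableEq A₁] [DecidableEq A₂]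
  {P₁ : (I → Q₁) → I → A₁} {P₂ : (I → Q₂) → I → A₂} {S : Finset I} {i : I}

lemma fiberDeviation_restView_le {X : Type*} [DecidableEq X] [Fintype Θ] [DecidableEq Θ]
    (W : Finset (I → R)) (τ : I → R → Θ) (q : R → X) :
    fiberDeviation q (jointLaw W (restView f P₁ P₂ τ S i) (eval i)) ≤
      fiberDeviation q (jointLaw W (fun ω ↦ (Pi.map τ ω, answers f P₁ P₂ S ω)) (eval i)) :=
  fiberDeviation_jointLaw_comp_le W (fun ω ↦ (Pi.map τ ω, answers f P₁ P₂ S ω)) (eval i) q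
    fun u ↦ ((fun j : {j // j ≠ i} ↦ u.1 j), u.2)

variable [Fintype Q₁] [DecidableEq Q₁] [Fintype Q₂] [DecidableEq Q₂]

lemma exists_fiberDeviation_restView_le (hS : Sᶜ.Nonempty) {W : Finset (I → R)} (hW : W.Nonempty)
    {L : ℝ} (hL₀ : Real.log (Fintype.card R ^ Fintype.card I / #W) ≤ L)
    (hL : Real.log ((Fintype.card A₁ * Fintype.card A₂ : ℝ) ^ #S *
      Fintype.card R ^ Fintype.card I / #W) ≤ L) :
    ∃ i ∉ S, ∃ D : I → Bool,
      fiberDeviation (Prod.fst ∘ f)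
        (jointLaw W (restView f P₁ P₂ (revealed f S D) S i) (eval i)) ≤ √(12 * L / #Sᶜ) ∧
      fiberDeviation (Prod.snd ∘ f)
        (jointLaw W (restView f P₁ P₂ (revealed f S D) S i) (eval i)) ≤ √(12 * L / #Sᶜ) ∧
      fiberDeviation (fun _ ↦ ()) (jointLaw W (fun _ ↦ ()) (eval i)) ≤ √(12 * L / #Sᶜ) := by
  let view (D : I → Bool) (ω : I → R) := (Pi.map (revealed f S D) ω, answers f P₁ P₂ S ω)
  let blank (ω : I → R) : (I → Unit) × Unit := (Pi.map (fun _ _ ↦ ()) ω, ())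
  have hview (D : I → Bool) :
      ∑ i ∈ Sᶜ, condDiv (revealed f S D i) (jointLaw W (view D) (eval i)) ≤ L := by
    refine (sum_le_univ_sum_of_nonneg fun i ↦ condDiv_jointLaw_nonneg _ _ hW _).trans
      ((sum_condDiv_le_log _ _ hW).trans ?_)
    simpa [mul_pow] using hL
  have hblank : ∑ i ∈ Sᶜ, condDiv (fun _ ↦ ()) (jointLaw W blank (eval i)) ≤ L := by
    refine (sum_le_univ_sum_of_nonneg fun i ↦ condDiv_jointLaw_nonneg _ _ hW _).trans
      ((sum_condDiv_le_log _ _ hW).trans ?_)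
    simpa using hL₀
  obtain ⟨i, hi, D, htrue, hfalse, hunit⟩ := exists_update_le hS
    (fun D i ↦ condDiv_jointLaw_nonneg _ _ hW _) (fun i ↦ condDiv_jointLaw_nonneg _ _ hW _)
    hview hblank
  have hi : i ∉ S := mem_compl.1 hi
  have hsqrt {x : ℝ} (hx : x ≤ 3 * L / #Sᶜ) : √(4 * x) ≤ √(12 * L / #Sᶜ) :=
    Real.sqrt_le_sqrt ((mul_le_mul_of_nonneg_left hx zero_le_four).trans_eq (by ring))
  refine ⟨i, hi, D, ?_, ?_, ?_⟩
  · rw [← fiberDeviation_revealed_update_true hi D, ← restView_revealed_update D true]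
    exact (fiberDeviation_restView_le W _ _).trans
      ((fiberDeviation_jointLaw_le_sqrt _ _ hW _).trans (hsqrt htrue))
  · rw [← fiberDeviation_revealed_update_false hi D, ← restView_revealed_update D false]
    exact (fiberDeviation_restView_le W _ _).trans
      ((fiberDeviation_jointLaw_le_sqrt _ _ hW _).trans (hsqrt hfalse))
  · exact (fiberDeviation_jointLaw_comp_le W blank (eval i) (fun _ ↦ ()) fun _ ↦ ()).trans
      ((fiberDeviation_jointLaw_le_sqrt _ _ hW _).trans (hsqrt hunit))

variable [Nonempty R] [Nonempty A₁] [Nonempty A₂] {V : R → A₁ → A₂ → Bool}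

lemma card_winSet_insert_div_le [Fintype Θ] [Nonempty Θ] [DecidableEq Θ] {τ : I → R → Θ}
    (hi : i ∉ S) (hτS : ∀ j ∈ S, Injective (τ j))
    (hτ : ∀ j ≠ i, (Prod.fst ∘ f).FactorsThrough (τ j) ∨ (Prod.snd ∘ f).FactorsThrough (τ j))
    (hW : (winSet f V P₁ P₂ S).Nonempty) {δ : ℝ}
    (h₁ : fiberDeviation (Prod.fst ∘ f)
      (jointLaw (winSet f V P₁ P₂ S) (restView f P₁ P₂ τ S i) (eval i)) ≤ δ)
    (h₂ : fiberDeviation (Prod.snd ∘ f)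
      (jointLaw (winSet f V P₁ P₂ S) (restView f P₁ P₂ τ S i) (eval i)) ≤ δ)
    (h : fiberDeviation (fun _ ↦ ()) (jointLaw (winSet f V P₁ P₂ S) (fun _ ↦ ()) (eval i)) ≤ δ) :
    (#(winSet f V P₁ P₂ (insert i S)) : ℝ) / #(winSet f V P₁ P₂ S) ≤ gameValue f V + 10 * δ := by
  obtain ⟨α, β, hα, hβ, hαβ⟩ := exists_card_filter_winSet_eq_card_mul_acceptProb
    (V := V) (P₁ := P₁) (P₂ := P₂) hi hτS hτ
  rw [winSet_insert]
  exact card_filter_div_card_le_gameValue_add hW hα hβ hαβ h₁ h₂ h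

omit [DecidableEq R] [DecidableEq A₁] [DecidableEq A₂] in
lemma exists_card_winSet_insert_div_le (hS : Sᶜ.Nonempty) (hW : (winSet f V P₁ P₂ S).Nonempty)
    {L : ℝ} (hL₀ : Real.log (Fintype.card R ^ Fintype.card I / #(winSet f V P₁ P₂ S)) ≤ L)
    (hL : Real.log ((Fintype.card A₁ * Fintype.card A₂ : ℝ) ^ #S *
      Fintype.card R ^ Fintype.card I / #(winSet f V P₁ P₂ S)) ≤ L) :
    ∃ i ∉ S, (#(winSet f V P₁ P₂ (insert i S)) : ℝ) / #(winSet f V P₁ P₂ S) ≤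
      gameValue f V + 10 * √(12 * L / #Sᶜ) := by
  classical
  obtain ⟨i, hi, D, h₁, h₂, h⟩ :=
    exists_fiberDeviation_restView_le (f := f) (P₁ := P₁) (P₂ := P₂) hS hW hL₀ hL
  exact ⟨i, hi, card_winSet_insert_div_le hi (fun _ ↦ revealed_injective D)
    (fun j _ ↦ factorsThrough_revealed D j) hW h₁ h₂ h⟩

end Step

section Constants

/-- The fraction of the coordinates that can be fixed one after the other while the winning
probability keeps dropping by a factor `(1 + v) / 2`. -/
noncomputable def roundRate (v : ℝ) (s : ℕ) : ℝ :=
  ((1 - v) / 100) ^ 2 / (Real.log s + 1)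

/-- The constant `c(v, s)` of the parallel repetition theorem. The minimum covers the two ways in
which fixing `⌈roundRate v s * n⌉₊` of `n` coordinates can end: each of them costs a factor
`(1 + v) / 2`, or the winning probability is at most `exp (-(roundRate v s * n))` earlier on. -/
noncomputable def decayRate (v : ℝ) (s : ℕ) : ℝ :=
  roundRate v s * min (-Real.log ((1 + v) / 2)) 1 / Real.log 2

variable {v : ℝ} (hv₁ : v < 1) (s : ℕ)

include hv₁ in
lemma roundRate_pos : 0 < roundRate v s := by
  have := Real.log_natCast_nonneg s
  have : 0 < 1 - v := by linarith
  unfold roundRate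
  positivity

variable (hv₀ : 0 ≤ v)
include hv₀ hv₁

lemma roundRate_le_half : roundRate v s ≤ 1 / 2 := by
  have := Real.log_natCast_nonneg s
  rw [roundRate, div_le_iff₀ (by linarith)]
  nlinarith

lemma decayRate_pos : 0 < decayRate v s := by
  have hlog : Real.log ((1 + v) / 2) < 0 := Real.log_neg (by linarith) (by linarith)
  have hmin : 0 < min (-Real.log ((1 + v) / 2)) 1 := lt_min (neg_pos.2 hlog) one_pos
  have := roundRate_pos hv₁ s
  unfold decayRate
  positivity

omit hv₀ in
lemma ten_mul_sqrt_le {n m : ℝ} (hn : 0 < n) (hm : n / 2 ≤ m) :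
    10 * √(12 * (roundRate v s * n * (Real.log s + 1)) / m) ≤ (1 - v) / 2 := by
  have hrate : roundRate v s * (Real.log s + 1) = ((1 - v) / 100) ^ 2 :=
    div_mul_cancel₀ _ (by linarith [Real.log_natCast_nonneg s])
  have hsq : 12 * (roundRate v s * n * (Real.log s + 1)) / m ≤ ((1 - v) / 20) ^ 2 := by
    rw [mul_right_comm, hrate, div_le_iff₀ (by linarith)]
    nlinarith [sq_nonneg (1 - v)]
  linarith [(Real.sqrt_le_left (by linarith)).2 hsq]

lemma max_pow_exp_le_two_rpow {n : ℝ} (hn : 0 ≤ n) :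
    max (((1 + v) / 2) ^ ⌈roundRate v s * n⌉₊) (Real.exp (-(roundRate v s * n))) ≤
      2 ^ (-(decayRate v s * n)) := by
  have hrate : 0 ≤ roundRate v s * n := mul_nonneg (roundRate_pos hv₁ s).le hn
  have hbase : 0 < (1 + v) / 2 := by linarith
  have hlog : Real.log ((1 + v) / 2) ≤ 0 := Real.log_nonpos hbase.le (by linarith)
  have htwo : (2 : ℝ) ^ (-(decayRate v s * n)) =
      Real.exp (-(roundRate v s * n * min (-Real.log ((1 + v) / 2)) 1)) := by
    rw [Real.rpow_def_of_pos two_pos, decayRate]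
    field_simp
  rw [htwo]
  refine max_le ?_ (Real.exp_le_exp.2 (neg_le_neg (mul_le_of_le_one_right hrate (min_le_right ..))))
  rw [← Real.exp_log (pow_pos hbase _), Real.log_pow, Real.exp_le_exp]
  calc ⌈roundRate v s * n⌉₊ * Real.log ((1 + v) / 2)
      ≤ roundRate v s * n * Real.log ((1 + v) / 2) :=
        mul_le_mul_of_nonpos_right (Nat.le_ceil _) hlog
    _ ≤ -(roundRate v s * n * min (-Real.log ((1 + v) / 2)) 1) := by
        rw [le_neg, ← mul_neg]
        exact mul_le_mul_of_nonneg_left (min_le_left ..) hrate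

end Constants

lemma exists_le_max_pow_of_exists_insert_le {I : Type*} [DecidableEq I] {w : Finset I → ℝ}
    {a ρ ε : ℝ} (hρ : 0 ≤ ρ) (hempty : w ∅ ≤ 1)
    (hstep : ∀ S, #S < a → ε < w S → ∃ i, w (insert i S) ≤ ρ * w S) :
    ∃ S, w S ≤ max (ρ ^ ⌈a⌉₊) ε := by
  by_contra! hbig
  have hround (k : ℕ) (hk : k ≤ ⌈a⌉₊) : ∃ S, #S ≤ k ∧ w S ≤ ρ ^ k := by
    induction k with
    | zero => exact ⟨∅, by simp, by simpa using hempty⟩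
    | succ k ih =>
      obtain ⟨S, hSk, hS⟩ := ih (by lia)
      have hSa : #S < a := (Nat.cast_le.2 hSk).trans_lt (Nat.lt_ceil.1 hk)
      obtain ⟨i, hi⟩ := hstep S hSa ((le_max_right ..).trans_lt (hbig S))
      refine ⟨insert i S, (card_insert_le i S).trans (by lia), hi.trans ?_⟩
      rw [pow_succ']
      gcongr
  obtain ⟨S, -, hS⟩ := hround _ le_rfl
  exact ((le_max_left ..).trans_lt (hbig S)).not_ge hS

section Repetition

variable {I : Type*} [Fintype I] [DecidableEq I] {R Q₁ Q₂ A₁ A₂ : Type} [Fintype R] [Nonempty R]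
  [Fintype Q₁] [DecidableEq Q₁] [Fintype Q₂] [DecidableEq Q₂] [Fintype A₁] [Nonempty A₁]
  [Fintype A₂] [Nonempty A₂] {f : R → Q₁ × Q₂} {V : R → A₁ → A₂ → Bool}
  (P₁ : (I → Q₁) → I → A₁) (P₂ : (I → Q₂) → I → A₂) (hv : gameValue f V < 1)
include hv

lemma exists_card_winSet_insert_le {S : Finset I} {γ : ℝ}
    (hγ : γ = roundRate (gameValue f V) (Fintype.card A₁ * Fintype.card A₂))
    (hS : #S < γ * Fintype.card I)
    (hW : Real.exp (-(γ * Fintype.card I)) <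
      #(winSet f V P₁ P₂ S) / (Fintype.card R : ℝ) ^ Fintype.card I) :
    ∃ i, (#(winSet f V P₁ P₂ (insert i S)) : ℝ) ≤
      (1 + gameValue f V) / 2 * #(winSet f V P₁ P₂ S) := by
  set s := Fintype.card A₁ * Fintype.card A₂ with hs
  set n := Fintype.card I
  have hγn : 0 < γ * n := (Nat.cast_nonneg _).trans_lt hS
  have hn₀ : (0 : ℝ) < n := pos_of_mul_pos_right hγn (hγ ▸ roundRate_pos hv s).le
  have hSn : (n : ℝ) / 2 ≤ #Sᶜ := by
    rw [card_compl, Nat.cast_sub (card_le_univ S)]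
    have := hγ ▸ roundRate_le_half hv s (gameValue_nonneg f V)
    nlinarith
  have hs₀ : (0 : ℝ) < s := by exact_mod_cast Nat.mul_pos Fintype.card_pos Fintype.card_pos
  have hR : (0 : ℝ) < Fintype.card R ^ n := by
    exact_mod_cast pow_pos (Fintype.card_pos (α := R)) n
  have hW₀ : (0 : ℝ) < #(winSet f V P₁ P₂ S) :=
    pos_of_mul_pos_left ((Real.exp_pos _).trans hW) (inv_nonneg.2 hR.le)
  have hlogs : 0 ≤ Real.log s := Real.log_natCast_nonneg s
  have hlogW : Real.log (Fintype.card R ^ n / #(winSet f V P₁ P₂ S)) ≤ γ * n := by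
    rw [← inv_div, Real.log_inv]
    linarith [(Real.lt_log_iff_exp_lt (by positivity)).2 hW]
  have hlog : Real.log ((Fintype.card A₁ * Fintype.card A₂ : ℝ) ^ #S *
      Fintype.card R ^ n / #(winSet f V P₁ P₂ S)) ≤ γ * n * (Real.log s + 1) := by
    rw [← Nat.cast_mul, ← hs, mul_div_assoc, Real.log_mul (by positivity) (by positivity),
      Real.log_pow, mul_add_one]
    gcongr
  obtain ⟨i, -, hi⟩ := exists_card_winSet_insert_div_le
    (card_pos.1 (by exact_mod_cast (half_pos hn₀).trans_le hSn))
    (card_pos.1 (by exact_mod_cast hW₀)) (hlogW.trans (by nlinarith)) hlog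
  refine ⟨i, ((div_le_iff₀ hW₀).1 hi).trans (mul_le_mul_of_nonneg_right ?_ hW₀.le)⟩
  linarith [hγ ▸ ten_mul_sqrt_le hv s hn₀ hSn]

lemma card_winSet_univ_div_le :
    (#(winSet f V P₁ P₂ univ) : ℝ) / (Fintype.card R : ℝ) ^ Fintype.card I ≤
      2 ^ (-(decayRate (gameValue f V) (Fintype.card A₁ * Fintype.card A₂) * Fintype.card I)) := by
  have hv₀ := gameValue_nonneg f V
  obtain ⟨S, hS⟩ := exists_le_max_pow_of_exists_insert_le (ρ := (1 + gameValue f V) / 2)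
    (w := fun S : Finset I ↦ (#(winSet f V P₁ P₂ S) : ℝ) / (Fintype.card R : ℝ) ^ Fintype.card I)
    (by linarith) (by simp [winSet_empty])
    fun S hS hW ↦ (exists_card_winSet_insert_le P₁ P₂ hv rfl hS hW).imp fun i hi ↦ by
      rw [← mul_div_assoc]; gcongr
  calc (#(winSet f V P₁ P₂ univ) : ℝ) / (Fintype.card R : ℝ) ^ Fintype.card I
      ≤ #(winSet f V P₁ P₂ S) / (Fintype.card R : ℝ) ^ Fintype.card I := by
        gcongr; exact winSet_anti (subset_univ S)
    _ ≤ 2 ^ (-(decayRate (gameValue f V) (Fintype.card A₁ * Fintype.card A₂) *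
          Fintype.card I)) := hS.trans (max_pow_exp_le_two_rpow hv _ hv₀ (Nat.cast_nonneg _))

end Repetition

end ParallelRepetition

/-- Raz's parallel repetition theorem: there is a function `c` assigning
to every `v ∈ [0,1)` and positive integer `s` a positive real `c v s`, such that for
every two-prover one-round game with value `< 1` and answer sets of total size
`|A₁|·|A₂| = s`, and every positive integer `ℓ`, the value of the `ℓ`-fold parallel
repetition is at most `2^(−c(val, s)·ℓ)`. -/
theorem parallel_repetition :
    ∃ c : ℝ → ℕ → ℝ,
      (∀ v : ℝ, 0 ≤ v → v < 1 → ∀ s : ℕ, 0 < s → 0 < c v s) ∧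
      ∀ (R Q₁ Q₂ A₁ A₂ : Type) [Fintype R] [Nonempty R]
        [Fintype Q₁] [DecidableEq Q₁] [Fintype Q₂] [DecidableEq Q₂]
        [Fintype A₁] [Nonempty A₁] [Fintype A₂] [Nonempty A₂]
        (f : R → Q₁ × Q₂) (V : R → A₁ → A₂ → Bool),
        gameValue f V < 1 →
        ∀ ℓ : ℕ, 0 < ℓ →
          gameValue
            (fun r : Fin ℓ → R =>
              ((fun i => (f (r i)).1 : Fin ℓ → Q₁), (fun i => (f (r i)).2 : Fin ℓ → Q₂)))
            (fun (r : Fin ℓ → R) (a₁ : Fin ℓ → A₁) (a₂ : Fin ℓ → A₂) =>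
              decide (∀ i : Fin ℓ, V (r i) (a₁ i) (a₂ i) = true)) ≤
          (2 : ℝ) ^ (-(c (gameValue f V) (Fintype.card A₁ * Fintype.card A₂) * (ℓ : ℝ))) := by
  refine ⟨ParallelRepetition.decayRate,
    fun v hv₀ hv₁ s _ ↦ ParallelRepetition.decayRate_pos hv₁ s hv₀, ?_⟩
  intro R Q₁ Q₂ A₁ A₂ _ _ _ _ _ _ _ _ _ _ f V hv ℓ _
  refine Finset.sup'_le _ _ fun P _ ↦ ?_
  have h := ParallelRepetition.card_winSet_univ_div_le (I := Fin ℓ) P.1 P.2 hv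
  simpa [ParallelRepetition.winSet, Function.comp_def] using h
end

section
/- Let G, the partition data, and the Set Cover instance S be as in the construction. If there exist labelings φ_A : A → Σ_A and φ_B : B → Σ_B satisfying every edge of G (i.e., π_e(φ_A(a)) = φ_B(b) for every e = (a,b) ∈ E), then the |A| sets {S_{a, φ_A(a)} : a ∈ A} cover the entire universe β × B; in particular S has a set cover of size |A|. -/
/-- The sets of Moshkovitz's Set Cover instance: for a vertex `a ∈ A` and a symbol
`σ ∈ Σ_A`, the set `S_{a,σ} ⊆ β × B` is the union, over the edges `e = (a, b)`
incident to `a`, of `P_{π_e(σ)}[j_b(e)] × {b}`. -/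
def coverSet {A B SA SB β : Type} [DecidableEq A] [DecidableEq B] [DecidableEq β]
    (E : Finset (A × B)) (π : A × B → SA → SB) {k : ℕ}
    (P : SB → Fin k → Finset β) (j : A × B → Fin k) (a : A) (σ : SA) :
    Finset (β × B) :=
  (E.filter (fun e => e.1 = a)).biUnion
    (fun e => (P (π e σ) (j e)).image (fun x => (x, e.2)))

section

variable {A B SA SB β : Type} [DecidableEq A] [DecidableEq B] [DecidableEq β]
  {E : Finset (A × B)} {π : A × B → SA → SB} {k : ℕ} {P : SB → Fin k → Finset β}
  {j : A × B → Fin k} {x : β} {b : B}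

theorem mem_coverSet {a : A} {σ : SA} :
    (x, b) ∈ coverSet E π P j a σ ↔ (a, b) ∈ E ∧ x ∈ P (π (a, b) σ) (j (a, b)) := by
  simp only [coverSet, Finset.mem_biUnion, Finset.mem_filter, Finset.mem_image, Prod.mk.injEq]
  constructor
  · rintro ⟨⟨_, _⟩, ⟨he, rfl⟩, _, hx, rfl, rfl⟩
    exact ⟨he, hx⟩
  · rintro ⟨he, hx⟩
    exact ⟨(a, b), ⟨he, rfl⟩, x, hx, rfl, rfl⟩

/-- As all labels at neighbours of `b` project to the one symbol `τ`, the sets chosen there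
contribute over `b` blocks of the single family `P τ`, and every block occurs. -/
theorem exists_mem_coverSet {φA : A → SA} {τ : SB}
    (hx : ∃ i, x ∈ P τ i) (hjsurj : ∀ i, ∃ e ∈ E, e.2 = b ∧ j e = i)
    (hsat : ∀ e ∈ E, e.2 = b → π e (φA e.1) = τ) :
    ∃ a, (x, b) ∈ coverSet E π P j a (φA a) := by
  obtain ⟨i, hxi⟩ := hx
  obtain ⟨⟨a, _⟩, he, rfl, rfl⟩ := hjsurj i
  refine ⟨a, mem_coverSet.2 ⟨he, ?_⟩⟩
  rwa [hsat _ he rfl]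

end

theorem exists_card_eq_and_biUnion_eq {ι κ γ : Type*} [Fintype ι] [DecidableEq γ]
    (s : ι → κ → Finset γ) (φ : ι → κ) :
    ∃ 𝒞 : Finset (ι × κ), 𝒞.card = Fintype.card ι ∧
      𝒞.biUnion (fun p => s p.1 p.2) = Finset.univ.biUnion fun i => s i (φ i) := by
  classical
  have graph_injective : Function.Injective fun i => (i, φ i) :=
    fun _ _ h => congrArg Prod.fst h
  exact ⟨Finset.univ.image fun i => (i, φ i),
    Finset.card_image_of_injective _ graph_injective, Finset.image_biUnion⟩

theorem moshkovitz_completeness_general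
    {A B SA SB β : Type} [Fintype A] [DecidableEq A] [Fintype B] [DecidableEq B]
    [Fintype β] [DecidableEq β]
    (E : Finset (A × B)) (π : A × B → SA → SB) {k : ℕ}
    (P : SB → Fin k → Finset β) (j : A × B → Fin k)
    (hjsurj : ∀ b : B, ∀ i : Fin k, ∃ e ∈ E, e.2 = b ∧ j e = i)
    (φA : A → SA) (φB : B → SB)
    (hPcover : ∀ b, Finset.univ.biUnion (P (φB b)) = (Finset.univ : Finset β))
    (hsat : ∀ e ∈ E, π e (φA e.1) = φB e.2) :
    Finset.univ.biUnion (fun a : A => coverSet E π P j a (φA a)) =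
      (Finset.univ : Finset (β × B)) ∧
    ∃ 𝒞 : Finset (A × SA), 𝒞.card = Fintype.card A ∧
      𝒞.biUnion (fun p => coverSet E π P j p.1 p.2) =
        (Finset.univ : Finset (β × B)) := by
  have covers : Finset.univ.biUnion (fun a : A => coverSet E π P j a (φA a)) =
      (Finset.univ : Finset (β × B)) := by
    refine Finset.eq_univ_of_forall fun ⟨x, b⟩ => ?_
    have hx : ∃ i, x ∈ P (φB b) i := by
      simpa only [Finset.mem_biUnion, Finset.mem_univ, true_and] using
        (hPcover b).ge (Finset.mem_univ x)
    obtain ⟨a, ha⟩ := exists_mem_coverSet hx (hjsurj b) fun e he hb => hb ▸ hsat e he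
    exact Finset.mem_biUnion.2 ⟨a, Finset.mem_univ a, ha⟩
  exact ⟨covers, covers ▸ exists_card_eq_and_biUnion_eq (coverSet E π P j) φA⟩

/-- completeness of Moshkovitz's reduction: if the bi-regular
projection game `G` has labelings `φA, φB` satisfying every edge, then the `|A|` sets
`S_{a, φA(a)}` cover the whole universe `β × B`; in particular the Set Cover instance
has a cover of size `|A|`. -/
theorem moshkovitz_completeness
    {A B SA SB β : Type} [Fintype A] [DecidableEq A] [Fintype B] [DecidableEq B]
    [Fintype β] [DecidableEq β] [DecidableEq SA]
    (E : Finset (A × B)) (π : A × B → SA → SB)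
    (DA k : ℕ)
    (hA : ∀ a : A, (E.filter (fun e => e.1 = a)).card = DA)
    (hB : ∀ b : B, (E.filter (fun e => e.2 = b)).card = k)
    (P : SB → Fin k → Finset β)
    (hPdisj : ∀ σ, ∀ i i' : Fin k, i ≠ i' → Disjoint (P σ i) (P σ i'))
    (hPcover : ∀ σ, Finset.univ.biUnion (P σ) = (Finset.univ : Finset β))
    (j : A × B → Fin k)
    (hjsurj : ∀ b : B, ∀ i : Fin k, ∃ e ∈ E, e.2 = b ∧ j e = i)
    (hjinj : ∀ e₁ ∈ E, ∀ e₂ ∈ E, e₁.2 = e₂.2 → j e₁ = j e₂ → e₁ = e₂)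
    (φA : A → SA) (φB : B → SB)
    (hsat : ∀ e ∈ E, π e (φA e.1) = φB e.2) :
    Finset.univ.biUnion (fun a : A => coverSet E π P j a (φA a)) =
      (Finset.univ : Finset (β × B)) ∧
    ∃ 𝒞 : Finset (A × SA), 𝒞.card = Fintype.card A ∧
      𝒞.biUnion (fun p => coverSet E π P j p.1 p.2) =
        (Finset.univ : Finset (β × B)) := by
  exact moshkovitz_completeness_general E π P j hjsurj φA φB (fun b => hPcover (φB b)) hsat
end
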